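/- arXiv:1802.01509 — 4 statements merged into one kernel-verified Lean document; each statement's English description precedes it below -/
import Mathlib

section
/- If G is a disconnected graph with connected components G_1,...,G_ℓ, then aw(G,k) = 1 + Σ_{i=1}^{ℓ} (aw(G_i,k) − 1). -/
namespace AntiVDW

/-- `v 0, v 1, …, v (k-1)` is a `k`-term arithmetic progression in `G`:
consecutive vertices are at a common finite distance `d`. -/
def IsAPSeq {V : Type*} (G : SimpleGraph V) (k : ℕ) (v : ℕ → V) : Prop :=
  ∃ d : ℕ, ∀ i, i + 1 < k → G.Reachable (v i) (v (i + 1)) ∧ G.dist (v i) (v (i + 1)) = d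

/-- `G` contains a `k`-AP that is rainbow under the coloring `c`. -/
def HasRainbowAP {V α : Type*} (G : SimpleGraph V) (k : ℕ) (c : V → α) : Prop :=
  ∃ v : ℕ → V, IsAPSeq G k v ∧ ∀ i j, i < k → j < k → i ≠ j → c (v i) ≠ c (v j)

/-- The anti-van der Waerden number: the least positive `r` such that every
exact (surjective) `r`-coloring of `G` contains a rainbow `k`-AP. -/
noncomputable def aw {V : Type*} (G : SimpleGraph V) (k : ℕ) : ℕ :=
  sInf {r : ℕ | 0 < r ∧ ∀ c : V → Fin r, Function.Surjective c → HasRainbowAP G k c}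

/-- Eccentricity of a vertex. -/
noncomputable def ecc {V : Type*} [Fintype V] (G : SimpleGraph V) (v : V) : ℕ :=
  Finset.univ.sup fun u => G.dist v u

/-- Radius of a graph. -/
noncomputable def rad {V : Type*} [Fintype V] [Nonempty V] (G : SimpleGraph V) : ℕ :=
  Finset.univ.inf' Finset.univ_nonempty (ecc G)

/-- Diameter of a graph. -/
noncomputable def diam {V : Type*} [Fintype V] (G : SimpleGraph V) : ℕ :=
  Finset.univ.sup (ecc G)

/-!
`aw G k - 1` is the largest number of colors of a coloring of `G` without rainbow `k`-AP, as soon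
as such a coloring exists. Distances inside a component are the same as in `G`, and a `k`-AP never
leaves its component, so a coloring has no rainbow `k`-AP exactly when none of its restrictions to
the components has one. Such a coloring therefore uses at most `aw Gᵢ k - 1` colors on each
component `Gᵢ`, and extremal colorings of the components with disjoint palettes attain the sum of
these bounds.
-/

section Components

variable {V α : Type*} {G : SimpleGraph V} {k : ℕ}

theorem dist_induce_supp (C : G.ConnectedComponent) (u v : C.supp) :
    (G.induce C.supp).dist u v = G.dist u v := by
  apply le_antisymm
  · obtain ⟨p, hp⟩ := (C.reachable_of_mem_supp u.2 v.2).exists_walk_length_eq_dist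
    have mem_supp : ∀ x ∈ p.support, x ∈ C.supp := fun x hx => by
      classical
      exact (SimpleGraph.ConnectedComponent.sound (p.takeUntil x hx).reachable).symm.trans u.2
    calc (G.induce C.supp).dist u v ≤ (p.induce C.supp mem_supp).length := SimpleGraph.dist_le _
      _ = p.length := by
        rw [← SimpleGraph.Walk.length_map (SimpleGraph.Embedding.induce C.supp).toHom]
        exact congrArg SimpleGraph.Walk.length (p.map_induce mem_supp)
      _ = G.dist u v := hp
  · obtain ⟨p, hp⟩ := (C.reachable_toSimpleGraph u.2 v.2).exists_walk_length_eq_dist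
    calc G.dist u v ≤ (p.map C.toSimpleGraph_hom).length := SimpleGraph.dist_le _
      _ = (G.induce C.supp).dist u v := (p.length_map _).trans hp

theorem isAPSeq_induce_supp_iff {C : G.ConnectedComponent} {w : ℕ → C.supp} :
    IsAPSeq (G.induce C.supp) k w ↔ IsAPSeq G k (fun i => (w i : V)) := by
  have reachable_iff (u v : C.supp) : (G.induce C.supp).Reachable u v ↔ G.Reachable u v :=
    iff_of_true (C.reachable_toSimpleGraph u.2 v.2) (C.reachable_of_mem_supp u.2 v.2)
  simp only [IsAPSeq, dist_induce_supp, reachable_iff]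

theorem IsAPSeq.congr {v w : ℕ → V} (hv : IsAPSeq G k v) (h : ∀ i < k, v i = w i) :
    IsAPSeq G k w := by
  obtain ⟨d, hd⟩ := hv
  refine ⟨d, fun i hi => ?_⟩
  rw [← h i (by omega), ← h (i + 1) hi]
  exact hd i hi

theorem IsAPSeq.connectedComponentMk_eq {v : ℕ → V} (hv : IsAPSeq G k v) {i : ℕ} (hi : i < k) :
    G.connectedComponentMk (v i) = G.connectedComponentMk (v 0) := by
  obtain ⟨d, hd⟩ := hv
  induction i with
  | zero => rfl
  | succ i ih => exact (SimpleGraph.ConnectedComponent.sound (hd i hi).1.symm).trans (ih (by omega))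

theorem IsAPSeq.exists_lift_component {v : ℕ → V} (hv : IsAPSeq G k v) :
    ∃ (C : G.ConnectedComponent) (w : ℕ → C.supp),
      IsAPSeq (G.induce C.supp) k w ∧ ∀ i < k, v i = w i := by
  -- The terms from index `k` on are arbitrary and may lie in other components.
  let v' i := if i < k then v i else v 0
  have hv' (i : ℕ) : v' i ∈ (G.connectedComponentMk (v 0)).supp := by
    by_cases hi : i < k
    · simpa only [v', if_pos hi, SimpleGraph.ConnectedComponent.mem_supp_iff]
        using hv.connectedComponentMk_eq hi
    · simp only [v', if_neg hi, SimpleGraph.ConnectedComponent.mem_supp_iff]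
  have eq_v' : ∀ i < k, v i = v' i := fun i hi => (if_pos hi).symm
  exact ⟨_, fun i => ⟨v' i, hv' i⟩, isAPSeq_induce_supp_iff.2 (hv.congr eq_v'), eq_v'⟩

theorem HasRainbowAP.of_comp {β : Type*} {c : V → α} (f : α → β)
    (h : HasRainbowAP G k (f ∘ c)) : HasRainbowAP G k c := by
  obtain ⟨v, hv, hne⟩ := h
  exact ⟨v, hv, fun i j hi hj hij heq => hne i j hi hj hij (congrArg f heq)⟩

theorem hasRainbowAP_iff_exists_component {c : V → α} :
    HasRainbowAP G k c ↔
      ∃ C : G.ConnectedComponent, HasRainbowAP (G.induce C.supp) k (C.supp.domRestrict c) := by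
  constructor
  · rintro ⟨v, hv, hne⟩
    obtain ⟨C, w, hw, heq⟩ := hv.exists_lift_component
    refine ⟨C, w, hw, fun i j hi hj hij => ?_⟩
    simpa only [Set.domRestrict_apply, ← heq i hi, ← heq j hj] using hne i j hi hj hij
  · rintro ⟨C, w, hw, hne⟩
    exact ⟨fun i => w i, isAPSeq_induce_supp_iff.1 hw, hne⟩

theorem ncard_range_le_sum_components [Fintype G.ConnectedComponent] (c : V → α) :
    (Set.range c).ncard ≤ ∑ C : G.ConnectedComponent, (Set.range (C.supp.domRestrict c)).ncard := by
  have range_eq : Set.range c = ⋃ C : G.ConnectedComponent, Set.range (C.supp.domRestrict c) := by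
    simp only [Set.range_domRestrict, ← Set.image_iUnion, G.iUnion_connectedComponentSupp,
      Set.image_univ]
  rw [range_eq]
  exact Set.ncard_iUnion_le_of_fintype _

end Components

section GlueColoring

variable {V : Type*} {G : SimpleGraph V} {α : G.ConnectedComponent → Type*}

/-- The coloring of `G` assembled from colorings of its components. The component is recorded in
the color, so that distinct components receive disjoint palettes. -/
def glueColoring (f : ∀ C : G.ConnectedComponent, C.supp → α C) (x : V) : Σ C, α C :=
  ⟨G.connectedComponentMk x, f _ ⟨x, rfl⟩⟩

theorem domRestrict_glueColoring (f : ∀ C : G.ConnectedComponent, C.supp → α C)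
    (C : G.ConnectedComponent) : C.supp.domRestrict (glueColoring f) = Sigma.mk C ∘ f C := by
  funext ⟨x, hx⟩
  obtain rfl : G.connectedComponentMk x = C := hx
  rfl

theorem glueColoring_surjective {f : ∀ C : G.ConnectedComponent, C.supp → α C}
    (hf : ∀ C, Function.Surjective (f C)) : Function.Surjective (glueColoring f) := by
  rintro ⟨C, a⟩
  obtain ⟨x, rfl⟩ := hf C a
  exact ⟨x, congrFun (domRestrict_glueColoring f C) x⟩

theorem not_hasRainbowAP_glueColoring {k : ℕ} {f : ∀ C : G.ConnectedComponent, C.supp → α C}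
    (hf : ∀ C : G.ConnectedComponent, ¬ HasRainbowAP (G.induce C.supp) k (f C)) :
    ¬ HasRainbowAP G k (glueColoring f) := by
  rw [hasRainbowAP_iff_exists_component]
  rintro ⟨C, hC⟩
  rw [domRestrict_glueColoring] at hC
  exact hf C (hC.of_comp _)

end GlueColoring

section AntiVanDerWaerden

variable {V α : Type*} (G : SimpleGraph V) (k : ℕ)

theorem aw_spec [Finite V] :
    0 < aw G k ∧ ∀ c : V → Fin (aw G k), Function.Surjective c → HasRainbowAP G k c := by
  refine Nat.sInf_mem (s := {r | 0 < r ∧ ∀ c : V → Fin r, Function.Surjective c →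
    HasRainbowAP G k c}) ⟨Nat.card V + 1, Nat.succ_pos _, fun c hc => ?_⟩
  have card_le := Nat.card_le_card_of_surjective c hc
  rw [Nat.card_fin] at card_le
  omega

variable {G k}

theorem aw_le {r : ℕ} (hr : 0 < r)
    (h : ∀ c : V → Fin r, Function.Surjective c → HasRainbowAP G k c) : aw G k ≤ r :=
  Nat.sInf_le ⟨hr, h⟩

theorem ncard_range_lt_aw [Finite V] {c : V → α} (hc : ¬ HasRainbowAP G k c) :
    (Set.range c).ncard < aw G k := by
  by_contra! hle
  obtain ⟨aw_pos, rainbow⟩ := aw_spec G k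
  -- With too many colors, merging some of them gives an exact `aw G k`-coloring.
  obtain ⟨merge, hmerge⟩ : ∃ f : Set.range c → Fin (aw G k), Function.Surjective f :=
    Function.exists_surjective_iff.2
      ⟨⟨fun _ => ⟨0, aw_pos⟩⟩,
        ⟨(Fin.castLEEmb hle).trans (Finite.equivFin (Set.range c)).symm.toEmbedding⟩⟩
  have rainbow_merge := rainbow _ (hmerge.comp Set.rangeFactorization_surjective)
  obtain ⟨v, hv, hne⟩ := rainbow_merge.of_comp
  exact hc ⟨v, hv, fun i j hi hj hij heq => hne i j hi hj hij (Subtype.ext heq)⟩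

theorem aw_eq_one_of_lt_two [Finite V] (hk : k < 2) : aw G k = 1 := by
  refine le_antisymm (aw_le one_pos fun c hc => ?_) (aw_spec G k).1
  obtain ⟨x, -⟩ := hc 0
  exact ⟨fun _ => x, ⟨0, fun i hi => by omega⟩, fun i j hi hj hij => by omega⟩

theorem one_lt_aw [Finite V] [Nonempty V] (hk : 2 ≤ k) : 1 < aw G k := by
  have no_rainbow : ¬ HasRainbowAP G k (fun _ : V => ()) := fun ⟨_, _, hne⟩ =>
    hne 0 1 (by omega) (by omega) zero_ne_one rfl
  simpa only [Set.range_const, Set.ncard_singleton] using ncard_range_lt_aw no_rainbow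

theorem exists_surjective_not_hasRainbowAP (h : 1 < aw G k) :
    ∃ c : V → Fin (aw G k - 1), Function.Surjective c ∧ ¬ HasRainbowAP G k c := by
  by_contra! hc
  have : aw G k ≤ aw G k - 1 := aw_le (by omega) hc
  omega

variable [Finite V] [Fintype G.ConnectedComponent]

theorem aw_le_one_add_sum_components :
    aw G k ≤ 1 + ∑ C : G.ConnectedComponent, (aw (G.induce C.supp) k - 1) := by
  refine aw_le (by omega) fun c hc => ?_
  by_contra hrainbow
  rw [hasRainbowAP_iff_exists_component, not_exists] at hrainbow
  have card_le : 1 + ∑ C : G.ConnectedComponent, (aw (G.induce C.supp) k - 1) ≤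
      ∑ C : G.ConnectedComponent, (aw (G.induce C.supp) k - 1) :=
    calc 1 + ∑ C : G.ConnectedComponent, (aw (G.induce C.supp) k - 1)
        = (Set.range c).ncard := by rw [hc.range_eq, Set.ncard_univ, Nat.card_fin]
      _ ≤ ∑ C : G.ConnectedComponent, (Set.range (C.supp.domRestrict c)).ncard :=
        ncard_range_le_sum_components c
      _ ≤ ∑ C : G.ConnectedComponent, (aw (G.induce C.supp) k - 1) :=
        Finset.sum_le_sum fun C _ => Nat.le_sub_one_of_lt (ncard_range_lt_aw (hrainbow C))
  omega

theorem sum_components_lt_aw :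
    ∑ C : G.ConnectedComponent, (aw (G.induce C.supp) k - 1) < aw G k := by
  rcases lt_or_ge k 2 with hk | hk
  · simp [aw_eq_one_of_lt_two hk]
  · have one_lt (C : G.ConnectedComponent) : 1 < aw (G.induce C.supp) k :=
      haveI := C.nonempty_supp.to_subtype
      one_lt_aw hk
    choose f f_surj f_free using fun C => exists_surjective_not_hasRainbowAP (one_lt C)
    calc ∑ C : G.ConnectedComponent, (aw (G.induce C.supp) k - 1)
        = (Set.range (glueColoring f)).ncard := by
          simp only [(glueColoring_surjective f_surj).range_eq, Set.ncard_univ, Nat.card_sigma,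
            Nat.card_fin]
      _ < aw G k := ncard_range_lt_aw (not_hasRainbowAP_glueColoring f_free)

end AntiVanDerWaerden

theorem stmt_1_general {V : Type*} [Finite V] (G : SimpleGraph V) [Fintype G.ConnectedComponent]
    (k : ℕ) : aw G k = 1 + ∑ C : G.ConnectedComponent, (aw (G.induce C.supp) k - 1) := by
  have upper := aw_le_one_add_sum_components (G := G) (k := k)
  have lower := sum_components_lt_aw (G := G) (k := k)
  omega

/-- If `G` is disconnected with connected components `G_i`, then
`aw(G,k) = 1 + Σ (aw(G_i,k) − 1)`. -/
theorem stmt_1 {V : Type*} [Fintype V] (G : SimpleGraph V)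
    [Fintype G.ConnectedComponent]
    (hG : ¬ G.Connected) (k : ℕ) :
    aw G k = 1 + ∑ C : G.ConnectedComponent, (aw (G.induce C.supp) k - 1) :=
  stmt_1_general G k

end AntiVDW
end

section
/- If T is a tree and c is a coloring of V(T) with no rainbow 3-AP, then there exists a path in T whose vertices receive all of the colors used by c. -/
namespace AntiVDW

/-!
In a finite minimal subtree that meets every color class, a leaf is the only vertex of its color.
Two leaves at even distance would form a rainbow 3-AP with their midpoint, so leaves are pairwise
at odd distance; since a tree is bipartite, there are at most two of them, and a finite subtree
with at most two leaves is a path. With finitely many colors, the paths from a root to one vertex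
of each color form a finite subtree meeting every color class, so a minimal one exists.
-/

section CutInterval

variable {V : Type*} {G : SimpleGraph V} {S : Set V} {u w x y z : V}

/-- The interval of vertices lying on every walk from `x` to `y`; in a tree it is the vertex set of
the path from `x` to `y`. If `y` is not reachable from `x` it is the whole vertex set. -/
def cutInterval (G : SimpleGraph V) (x y : V) : Set V :=
  {z | ∀ p : G.Walk x y, z ∈ p.support}

/-- Convexity with respect to `cutInterval`; in a tree the nonempty convex sets are the vertex sets
of subtrees. -/
def IsCutConvex (G : SimpleGraph V) (S : Set V) : Prop :=
  ∀ ⦃x⦄, x ∈ S → ∀ ⦃y⦄, y ∈ S → cutInterval G x y ⊆ S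

/-- The vertices of `S` lying on no interval between other vertices of `S`; for a subtree these are
its leaves (or its only vertex). -/
def cutExtremePoints (G : SimpleGraph V) (S : Set V) : Set V :=
  {z ∈ S | ∀ x ∈ S, ∀ y ∈ S, z ∈ cutInterval G x y → x = z ∨ y = z}

lemma left_mem_cutInterval : x ∈ cutInterval G x y :=
  fun p ↦ p.start_mem_support

lemma right_mem_cutInterval : y ∈ cutInterval G x y :=
  fun p ↦ p.end_mem_support

lemma eq_of_mem_cutInterval_self (h : z ∈ cutInterval G x x) : z = x :=
  SimpleGraph.Walk.mem_support_nil_iff.mp (h .nil)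

lemma cutInterval_subset_union (u : V) :
    cutInterval G x y ⊆ cutInterval G u x ∪ cutInterval G u y := by
  intro z hz
  by_contra hzu
  simp only [cutInterval, Set.mem_union, Set.mem_ofPred_eq, not_or, not_forall] at hzu
  obtain ⟨⟨p, hp⟩, q, hq⟩ := hzu
  have hpq := hz (p.reverse.append q)
  simp_all [SimpleGraph.Walk.mem_support_append_iff]

lemma cutInterval_subset_of_mem (hy : y ∈ cutInterval G u w) :
    cutInterval G u y ⊆ cutInterval G u w := by
  classical
  exact fun z hz p ↦ p.support_takeUntil_subset_support (hy p) (hz _)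

lemma dist_lt_of_mem_cutInterval (hr : G.Reachable u y) (hz : z ∈ cutInterval G u y)
    (hne : z ≠ y) : G.dist u z < G.dist u y := by
  classical
  obtain ⟨p, hp⟩ := hr.exists_walk_length_eq_dist
  calc G.dist u z ≤ (p.takeUntil z (hz p)).length := SimpleGraph.dist_le _
    _ < p.length := p.length_takeUntil_lt_length (hz p) hne
    _ = G.dist u y := hp

lemma finite_cutInterval (hr : G.Reachable x y) : (cutInterval G x y).Finite := by
  obtain ⟨p⟩ := hr
  exact p.support.finite_toSet.subset fun z hz ↦ hz p

lemma IsCutConvex.sdiff_singleton (hS : IsCutConvex G S) (hz : z ∈ cutExtremePoints G S) :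
    IsCutConvex G (S \ {z}) := by
  rintro x ⟨hx, hxz⟩ y ⟨hy, hyz⟩ v hv
  refine ⟨hS hx hy hv, ?_⟩
  rintro rfl
  exact (hz.2 x hx y hy hv).elim hxz hyz

lemma isCutConvex_biUnion_cutInterval (r : V) (F : Set V) :
    IsCutConvex G (⋃ x ∈ F, cutInterval G r x) := by
  intro x hx y hy z hz
  simp only [Set.mem_iUnion, exists_prop] at hx hy ⊢
  obtain ⟨a, ha, hxa⟩ := hx
  obtain ⟨b, hb, hyb⟩ := hy
  rcases cutInterval_subset_union r hz with hzx | hzy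
  · exact ⟨a, ha, cutInterval_subset_of_mem hxa hzx⟩
  · exact ⟨b, hb, cutInterval_subset_of_mem hyb hzy⟩

lemma exists_finite_isCutConvex_superset (hG : G.Connected) {F : Set V} (hF : F.Finite) :
    ∃ S : Set V, S.Finite ∧ IsCutConvex G S ∧ F ⊆ S := by
  obtain ⟨r⟩ := hG.nonempty
  exact ⟨⋃ x ∈ F, cutInterval G r x, hF.biUnion fun x _ ↦ finite_cutInterval (hG r x),
    isCutConvex_biUnion_cutInterval r F,
    fun x hx ↦ Set.mem_biUnion hx right_mem_cutInterval⟩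

lemma exists_cutExtremePoint_mem_cutInterval (hG : G.Preconnected) (hS : S.Finite) (hz : z ∈ S)
    (r : V) : ∃ e ∈ cutExtremePoints G S, z ∈ cutInterval G r e := by
  obtain ⟨e, ⟨heS, hze⟩, hmax⟩ := (hS.sep fun e ↦ z ∈ cutInterval G r e).exists_maximalFor
    (G.dist r) _ ⟨z, hz, right_mem_cutInterval⟩
  have not_beyond : ∀ x ∈ S, e ∈ cutInterval G r x → x = e := by
    intro x hx hex
    by_contra hne
    have hlt := dist_lt_of_mem_cutInterval (hG r x) hex (Ne.symm hne)
    exact hlt.not_ge (hmax ⟨hx, cutInterval_subset_of_mem hex hze⟩ hlt.le)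
  exact ⟨e, ⟨heS, fun x hx y hy hexy ↦
    (cutInterval_subset_union r hexy).imp (not_beyond x hx) (not_beyond y hy)⟩, hze⟩

lemma subset_cutInterval_of_cutExtremePoints_subset (hG : G.Preconnected) (hS : S.Finite)
    (hE : cutExtremePoints G S ⊆ {u, w}) : S ⊆ cutInterval G u w := by
  intro z hz
  obtain ⟨e, he, hze⟩ := exists_cutExtremePoint_mem_cutInterval hG hS hz u
  rcases hE he with rfl | rfl
  · exact eq_of_mem_cutInterval_self hze ▸ left_mem_cutInterval
  · exact hze

end CutInterval

section Distance

variable {V : Type*} {G : SimpleGraph V} {x y z : V}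

lemma exists_subset_pair_of_pairwise_odd_dist [Nonempty V] (hG : G.IsBipartite) {A : Set V}
    (hA : A.Pairwise fun x y ↦ Odd (G.dist x y)) : ∃ u w, A ⊆ {u, w} := by
  let f : G.Coloring Bool := hG.toColoring (by simp)
  have hf : Set.InjOn f A := by
    intro x hx y hy hfxy
    by_contra hne
    have hodd : Odd (G.dist x y) := hA hx hy hne
    have hr : G.Reachable x y := .of_dist_ne_zero hodd.pos.ne'
    obtain ⟨p, hp⟩ := hr.exists_walk_length_eq_dist
    rw [← hp, f.odd_length_iff_not_congr p] at hodd
    simp [hfxy] at hodd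
  refine ⟨Function.invFunOn f A true, Function.invFunOn f A false, fun x hx ↦ ?_⟩
  have hx_eq : Function.invFunOn f A (f x) = x := hf.leftInvOn_invFunOn hx
  cases hfx : f x <;> simp_all

lemma mem_cutInterval_of_isPath (hG : G.IsAcyclic) {p : G.Walk x y} (hp : p.IsPath)
    (hz : z ∈ p.support) : z ∈ cutInterval G x y := by
  classical
  intro q
  have hpq : p = q.bypass := congrArg Subtype.val ((hG.subsingleton_path x y).elim ⟨p, hp⟩ q.toPath)
  exact q.support_bypass_subset_support (hpq ▸ hz)

lemma exists_mem_cutInterval_dist_eq (hG : G.IsAcyclic) (hr : G.Reachable x y)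
    (h : Even (G.dist x y)) : ∃ m ∈ cutInterval G x y, G.dist x m = G.dist m y := by
  obtain ⟨p, hp, hlen⟩ := hr.exists_path_of_dist
  obtain ⟨k, hk⟩ := h
  refine ⟨p.getVert k, mem_cutInterval_of_isPath hG hp (p.getVert_mem_support k), ?_⟩
  rw [← SimpleGraph.length_eq_dist_of_subwalk hlen (p.isSubwalk_take k),
    ← SimpleGraph.length_eq_dist_of_subwalk hlen (p.isSubwalk_drop k),
    SimpleGraph.Walk.take_length, SimpleGraph.Walk.drop_length]
  omega

end Distance

section Coloring

variable {V α : Type*} {G : SimpleGraph V} {c : V → α} {S : Set V} {x y z : V}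

/-- A convex set of vertices on which the coloring `c` takes all of its values; in a tree, a subtree
meeting every color class. -/
structure IsPanchromatic (G : SimpleGraph V) (c : V → α) (S : Set V) : Prop where
  isCutConvex : IsCutConvex G S
  exists_color_eq : ∀ x, ∃ y ∈ S, c y = c x

lemma exists_finite_minimal_isPanchromatic (hG : G.Connected) (hc : (Set.range c).Finite) :
    ∃ S : Set V, S.Finite ∧ Minimal (IsPanchromatic G c) S := by
  have : Finite (Set.range c) := hc
  obtain ⟨S₀, hfin, hconv, hsub⟩ :=
    exists_finite_isCutConvex_superset hG (Set.finite_range (Set.rangeSplitting c))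
  have hS₀ : IsPanchromatic G c S₀ :=
    ⟨hconv, fun x ↦ ⟨_, hsub ⟨⟨c x, x, rfl⟩, rfl⟩, Set.apply_rangeSplitting c _⟩⟩
  obtain ⟨S, ⟨hSS₀, hS⟩, hmin⟩ :=
    (hfin.finite_subsets.sep (IsPanchromatic G c)).exists_minimal ⟨S₀, subset_refl S₀, hS₀⟩
  exact ⟨S, hfin.subset hSS₀, hS, fun R hR hRS ↦ hmin ⟨hRS.trans hSS₀, hR⟩ hRS⟩

lemma eq_of_color_eq_of_mem_cutExtremePoints (hS : Minimal (IsPanchromatic G c) S)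
    (hz : z ∈ cutExtremePoints G S) (hy : y ∈ S) (hyz : c y = c z) : y = z := by
  by_contra hne
  have herase : IsPanchromatic G c (S \ {z}) := by
    refine ⟨hS.prop.isCutConvex.sdiff_singleton hz, fun x ↦ ?_⟩
    obtain ⟨v, hv, hvx⟩ := hS.prop.exists_color_eq x
    by_cases hvz : v = z
    · exact ⟨y, ⟨hy, hne⟩, by rw [hyz, ← hvz, hvx]⟩
    · exact ⟨v, ⟨hv, hvz⟩, hvx⟩
  exact (hS.le_of_le herase Set.sdiff_subset hz.1).2 rfl

lemma hasRainbowAP_three (hxy : G.Reachable x y) (hyz : G.Reachable y z)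
    (hd : G.dist x y = G.dist y z) (hcxy : c x ≠ c y) (hcyz : c y ≠ c z) (hcxz : c x ≠ c z) :
    HasRainbowAP G 3 c := by
  refine ⟨fun i ↦ [x, y, z].getD i z, ⟨G.dist x y, fun i hi ↦ ?_⟩, fun i j hi hj hij ↦ ?_⟩
  · obtain rfl | rfl : i = 0 ∨ i = 1 := by omega
    · exact ⟨hxy, rfl⟩
    · exact ⟨hyz, hd.symm⟩
  · interval_cases i <;> interval_cases j <;>
      simp_all [hcxy.symm, hcyz.symm, hcxz.symm]

lemma pairwise_odd_dist_cutExtremePoints (hG : G.IsTree) (h : ¬ HasRainbowAP G 3 c)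
    (hS : Minimal (IsPanchromatic G c) S) :
    (cutExtremePoints G S).Pairwise fun x y ↦ Odd (G.dist x y) := by
  intro x hx y hy hxy
  by_contra hodd
  have hconn := hG.connected.preconnected
  obtain ⟨m, hm, hd⟩ :=
    exists_mem_cutInterval_dist_eq hG.isAcyclic (hconn x y) (Nat.not_odd_iff_even.mp hodd)
  have hmS : m ∈ S := hS.prop.isCutConvex hx.1 hy.1 hm
  have hmx : m ≠ x := by
    rintro rfl
    exact hxy ((hconn m y).dist_eq_zero_iff.mp (hd ▸ G.dist_self))
  have hmy : m ≠ y := by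
    rintro rfl
    exact hxy ((hconn x m).dist_eq_zero_iff.mp (hd.trans G.dist_self))
  exact h <| hasRainbowAP_three (hconn x m) (hconn m y) hd
    (fun hc ↦ hmx (eq_of_color_eq_of_mem_cutExtremePoints hS hx hmS hc.symm))
    (fun hc ↦ hmy (eq_of_color_eq_of_mem_cutExtremePoints hS hy hmS hc))
    (fun hc ↦ hxy (eq_of_color_eq_of_mem_cutExtremePoints hS hy hx.1 hc))

end Coloring

theorem stmt_5_general {V α : Type*} (T : SimpleGraph V) (hT : T.IsTree) (c : V → α)
    (hc : (Set.range c).Finite) (h : ¬ HasRainbowAP T 3 c) :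
    ∃ (u w : V) (p : T.Walk u w), p.IsPath ∧ ∀ x : V, ∃ y ∈ p.support, c y = c x := by
  have := hT.connected.nonempty
  obtain ⟨S, hfin, hS⟩ := exists_finite_minimal_isPanchromatic hT.connected hc
  obtain ⟨u, w, hE⟩ := exists_subset_pair_of_pairwise_odd_dist hT.colorable_two
    (pairwise_odd_dist_cutExtremePoints hT h hS)
  have hSuw : S ⊆ cutInterval T u w :=
    subset_cutInterval_of_cutExtremePoints_subset hT.connected.preconnected hfin hE
  obtain ⟨p, hp⟩ := (hT.connected u w).exists_isPath
  refine ⟨u, w, p, hp, fun x ↦ ?_⟩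
  obtain ⟨y, hy, hyx⟩ := hS.prop.exists_color_eq x
  exact ⟨y, hSuw hy p, hyx⟩

/-- In any coloring of a finite tree with no rainbow 3-AP, there is a path
containing all of the colors. -/
theorem stmt_5 {V α : Type*} [Fintype V] (T : SimpleGraph V) (hT : T.IsTree)
    (c : V → α) (h : ¬ HasRainbowAP T 3 c) :
    ∃ (u w : V) (p : T.Walk u w), p.IsPath ∧ ∀ x : V, ∃ y ∈ p.support, c y = c x :=
  stmt_5_general T hT c (Set.finite_range c) h

end AntiVDW
end

section
/- If T is a tree with no bijacent vertices, then aw(T,3) ≤ 4. -/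
namespace AntiVDW

/-- A bijacent vertex: a degree-2 vertex whose two neighbors also have degree 2. -/
def Bijacent {V : Type*} [Fintype V] (G : SimpleGraph V) [DecidableRel G.Adj] (v : V) : Prop :=
  G.degree v = 2 ∧ ∀ u ∈ G.neighborFinset v, G.degree u = 2

/-!
Suppose that a coloring with at least four colors has no rainbow 3-AP, and let `n` be the minimal
length of a path whose ends have distinct colors and which meets a third color. On such a path of
length `n`, all interior vertices have the same color: its colors are `C, B, …, B, A`. A path to a
vertex of a fourth color `D` cannot leave it at an interior vertex, so it extends the strip to a
longer path, say beyond the end of color `A`.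

Midpoints of subpaths force `n` to be odd, the longer path to have length over `2 * n`, color `B`
at position `n + 1`, and color `C` or `A` at position `2 * n`. In the first case positions `n` to
`2 * n` form another strip `A, B, …, B, C` with a shorter extension to `D`, so we may assume the
second case. Then a neighbor off the path of one of the vertices at positions `n - 1`, `n`, `n + 1`
would complete a rainbow 3-AP, whence the vertex at position `n` is bijacent.
-/

section

variable {V α : Type*}

/-- `Bijacent` without finiteness assumptions: `v` has exactly two neighbors, and so does each of
its neighbors. The extended cardinality `encard` is infinite at vertices of infinite degree. -/
def IsBijacent (G : SimpleGraph V) (v : V) : Prop :=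
  (G.neighborSet v).encard = 2 ∧ ∀ u ∈ G.neighborSet v, (G.neighborSet u).encard = 2

theorem isBijacent_iff_bijacent [Fintype V] {G : SimpleGraph V} [DecidableRel G.Adj] {v : V} :
    IsBijacent G v ↔ Bijacent G v := by
  have encard_eq_two_iff (u : V) : (G.neighborSet u).encard = 2 ↔ G.degree u = 2 := by
    rw [← G.card_neighborFinset_eq_degree, SimpleGraph.neighborFinset,
      Set.encard_eq_coe_toFinset_card]
    norm_cast
  simp only [IsBijacent, Bijacent, encard_eq_two_iff, SimpleGraph.mem_neighborSet,
    SimpleGraph.mem_neighborFinset]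

theorem color_eq_of_dist_eq {G : SimpleGraph V} (hG : G.Connected) {c : V → α}
    (hc : ¬ HasRainbowAP G 3 c) {u v w : V} (h : G.dist u v = G.dist v w) :
    c u = c v ∨ c v = c w ∨ c u = c w := by
  by_contra! hne
  obtain ⟨huv, hvw, huw⟩ := hne
  refine hc ⟨fun | 0 => u | 1 => v | _ => w, ⟨G.dist u v, fun i hi => ⟨hG _ _, ?_⟩⟩,
    fun i j hi hj hij => ?_⟩
  · obtain rfl | rfl : i = 0 ∨ i = 1 := by omega
    exacts [rfl, h.symm]
  · interval_cases i <;> interval_cases j <;> simp_all [Ne.symm]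

theorem exists_color_ne {c : V → α} (hc : 3 < (Set.range c).encard) (A B C : α) :
    ∃ z, c z ≠ A ∧ c z ≠ B ∧ c z ≠ C := by
  by_contra! h
  have range_subset : Set.range c ⊆ {A, B, C} := by
    rintro _ ⟨z, rfl⟩
    simp only [Set.mem_insert_iff, Set.mem_singleton_iff]
    grind
  have encard_le_three : ({A, B, C} : Set α).encard ≤ 3 := by
    classical
    rw [← Finset.coe_pair, ← Finset.coe_insert, Set.encard_coe_eq_coe_finsetCard]
    exact_mod_cast Finset.card_le_three
  exact absurd ((Set.encard_le_encard range_subset).trans encard_le_three) (not_le.2 hc)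

section Paths

variable {G : SimpleGraph V} {u v w : V}

theorem length_eq_dist_of_isPath (hG : G.IsAcyclic) {p : G.Walk u v} (hp : p.IsPath) :
    p.length = G.dist u v := by
  obtain ⟨q, hq, hlen⟩ := p.reachable.exists_path_of_dist
  have hpq : p = q := congrArg Subtype.val ((hG.subsingleton_path u v).elim ⟨p, hp⟩ ⟨q, hq⟩)
  rw [hpq, hlen]

theorem dist_getVert (hG : G.IsAcyclic) {p : G.Walk u v} (hp : p.IsPath) {i j : ℕ}
    (hi : i ≤ p.length) (hj : j ≤ p.length) :
    G.dist (p.getVert i) (p.getVert j) = ((i : ℤ) - j).natAbs := by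
  wlog hij : i ≤ j generalizing i j
  · rw [SimpleGraph.dist_comm, this hj hi (by omega)]
    omega
  have h := length_eq_dist_of_isPath hG ((hp.drop i).take (j - i))
  simp only [SimpleGraph.Walk.take_length, SimpleGraph.Walk.drop_length,
    SimpleGraph.Walk.drop_getVert, Nat.add_sub_cancel' hij] at h
  omega

theorem isPath_append {p : G.Walk u v} {q : G.Walk v w} (hp : p.IsPath) (hq : q.IsPath)
    (h : ∀ x ∈ p.support, x ∈ q.support → x = v) : (p.append q).IsPath := by
  have hq' := hq.support_nodup
  rw [← q.cons_tail_support, List.nodup_cons] at hq'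
  rw [SimpleGraph.Walk.isPath_def, SimpleGraph.Walk.support_append]
  refine hp.support_nodup.append hq'.2 fun x hxp hxq => hq'.1 ?_
  exact h x hxp (List.mem_of_mem_tail hxq) ▸ hxq

theorem dist_getVert_of_isPath_append (hG : G.IsAcyclic) {p : G.Walk u v} {q : G.Walk v w}
    (h : (p.append q).IsPath) {i j : ℕ} (hi : i ≤ p.length) (hj : j ≤ q.length) :
    G.dist (p.getVert i) (q.getVert j) = p.length - i + j := by
  have hlen := SimpleGraph.Walk.length_append p q
  have hd := dist_getVert hG h (i := i) (j := p.length + j) (by omega) (by omega)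
  rw [SimpleGraph.Walk.getVert_append', SimpleGraph.Walk.getVert_append, if_pos hi,
    if_neg (by omega), Nat.add_sub_cancel_left] at hd
  omega

theorem neighborSet_getVert (hG : G.IsAcyclic) {p : G.Walk u v} (hp : p.IsPath) {i : ℕ}
    (hi₀ : 0 < i) (hi : i < p.length) (h : ∀ q, G.Adj (p.getVert i) q → q ∈ p.support) :
    G.neighborSet (p.getVert i) = {p.getVert (i - 1), p.getVert (i + 1)} := by
  ext q
  simp only [SimpleGraph.mem_neighborSet, Set.mem_insert_iff, Set.mem_singleton_iff]
  constructor
  · intro hq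
    obtain ⟨j, rfl, hj⟩ := SimpleGraph.Walk.mem_support_iff_exists_getVert.1 (h q hq)
    rw [← SimpleGraph.dist_eq_one_iff_adj, dist_getVert hG hp (by omega) hj] at hq
    obtain rfl | rfl : j = i - 1 ∨ j = i + 1 := by omega
    exacts [.inl rfl, .inr rfl]
  · rintro (rfl | rfl) <;>
      rw [← SimpleGraph.dist_eq_one_iff_adj, dist_getVert hG hp (by omega) (by omega)] <;> omega

theorem encard_neighborSet_getVert (hG : G.IsAcyclic) {p : G.Walk u v} (hp : p.IsPath) {i : ℕ}
    (hi₀ : 0 < i) (hi : i < p.length) (h : ∀ q, G.Adj (p.getVert i) q → q ∈ p.support) :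
    (G.neighborSet (p.getVert i)).encard = 2 := by
  rw [neighborSet_getVert hG hp hi₀ hi h, Set.encard_pair]
  intro heq
  have : i - 1 = i + 1 := hp.getVert_injOn (show i - 1 ≤ p.length by omega)
    (show i + 1 ≤ p.length by omega) heq
  omega

theorem isBijacent_getVert (hG : G.IsAcyclic) {p : G.Walk u v} (hp : p.IsPath) {i : ℕ}
    (hi₁ : 1 < i) (hi : i + 1 < p.length)
    (h : ∀ j, i ≤ j + 1 → j ≤ i + 1 → ∀ q, G.Adj (p.getVert j) q → q ∈ p.support) :
    IsBijacent G (p.getVert i) := by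
  have encard_eq_two (j : ℕ) (hij : i ≤ j + 1) (hji : j ≤ i + 1) :=
    encard_neighborSet_getVert hG hp (i := j) (by omega) (by omega) (h j hij hji)
  refine ⟨encard_eq_two i (by omega) (by omega), fun u hu => ?_⟩
  rw [neighborSet_getVert hG hp (by omega) (by omega) (h i (by omega) (by omega))] at hu
  obtain rfl | rfl := hu
  · exact encard_eq_two (i - 1) (by omega) (by omega)
  · exact encard_eq_two (i + 1) (by omega) (by omega)

end Paths

section Branches

variable {G : SimpleGraph V} {u v z : V}

/-- The path `r` leaves the path `p` at its `i`-th vertex and does not meet `p` again. -/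
structure IsBranch (p : G.Walk u v) (i : ℕ) (r : G.Walk (p.getVert i) z) : Prop where
  isPath : p.IsPath
  isPath_branch : r.IsPath
  le_length : i ≤ p.length
  eq_of_mem : ∀ w ∈ p.support, w ∈ r.support → w = p.getVert i

namespace IsBranch

variable {p : G.Walk u v} {i : ℕ} {r : G.Walk (p.getVert i) z}

theorem isPath_take_append (h : IsBranch p i r) : ((p.take i).append r).IsPath :=
  isPath_append (h.isPath.take i) h.isPath_branch fun w hw =>
    h.eq_of_mem w ((p.isSubwalk_take i).support_subset hw)

theorem isPath_reverse_drop_append (h : IsBranch p i r) :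
    ((p.drop i).reverse.append r).IsPath := by
  refine isPath_append (h.isPath.drop i).reverse h.isPath_branch fun w hw => h.eq_of_mem w ?_
  rw [SimpleGraph.Walk.support_reverse, List.mem_reverse] at hw
  exact (p.isSubwalk_drop i).support_subset hw

theorem dist_getVert (hG : G.IsAcyclic) (h : IsBranch p i r) {j k : ℕ} (hj : j ≤ p.length)
    (hk : k ≤ r.length) :
    G.dist (p.getVert j) (r.getVert k) = ((i : ℤ) - j).natAbs + k := by
  have hi := h.le_length
  rcases le_total j i with hji | hij
  · have hd := dist_getVert_of_isPath_append hG h.isPath_take_append (i := j)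
      (by rw [SimpleGraph.Walk.take_length]; omega) hk
    rw [SimpleGraph.Walk.take_getVert, SimpleGraph.Walk.take_length, min_eq_right hji] at hd
    omega
  · have hd := dist_getVert_of_isPath_append hG h.isPath_reverse_drop_append
      (i := p.length - j)
      (by rw [SimpleGraph.Walk.length_reverse, SimpleGraph.Walk.drop_length]; omega) hk
    rw [SimpleGraph.Walk.getVert_reverse, SimpleGraph.Walk.drop_getVert,
      SimpleGraph.Walk.length_reverse, SimpleGraph.Walk.drop_length,
      show i + (p.length - i - (p.length - j)) = j by omega] at hd
    omega

end IsBranch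

theorem isBranch_of_adj {p : G.Walk u v} (hp : p.IsPath) {i : ℕ} (hi : i ≤ p.length)
    (h : G.Adj (p.getVert i) z) (hz : z ∉ p.support) : IsBranch p i h.toWalk where
  isPath := hp
  isPath_branch := h.isPath_toWalk
  le_length := hi
  eq_of_mem w hwp hwr := by
    rw [SimpleGraph.Adj.support_toWalk] at hwr
    grind

theorem exists_isBranch (hG : G.Connected) {p : G.Walk u v} (hp : p.IsPath) (z : V) :
    ∃ i, ∃ r : G.Walk (p.getVert i) z, IsBranch p i r := by
  obtain ⟨i, hi, closest⟩ := Finset.exists_min_image (Finset.range (p.length + 1))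
    (fun i => G.dist (p.getVert i) z) ⟨0, by simp⟩
  obtain ⟨r, hr, hlen⟩ := hG.exists_path_of_dist (p.getVert i) z
  refine ⟨i, r, hp, hr, by simpa [Nat.lt_succ_iff] using hi, fun w hwp hwr => ?_⟩
  obtain ⟨j, rfl, hj⟩ := SimpleGraph.Walk.mem_support_iff_exists_getVert.1 hwp
  obtain ⟨k, hk, hkr⟩ := SimpleGraph.Walk.mem_support_iff_exists_getVert.1 hwr
  have h_le := closest j (by simpa [Nat.lt_succ_iff] using hj)
  have h_dist : G.dist (p.getVert j) z ≤ r.length - k := by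
    rw [← hk, ← SimpleGraph.Walk.drop_length]
    exact SimpleGraph.dist_le _
  have hk₀ : k = 0 := by omega
  rw [← hk, hk₀, r.getVert_zero]

end Branches

section Colorings

variable {T : SimpleGraph V} {c : V → α} {u v z : V}

theorem color_eq_of_midpoint (hT : T.IsTree) (hc : ¬ HasRainbowAP T 3 c) {p : T.Walk u v}
    (hp : p.IsPath) {i j k : ℕ} (hi : i ≤ p.length) (hk : k ≤ p.length) (h : i + k = 2 * j) :
    c (p.getVert i) = c (p.getVert j) ∨ c (p.getVert j) = c (p.getVert k) ∨
      c (p.getVert i) = c (p.getVert k) := by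
  apply color_eq_of_dist_eq hT.connected hc
  rw [dist_getVert hT.isAcyclic hp hi (by omega), dist_getVert hT.isAcyclic hp (by omega) hk]
  omega

namespace IsBranch

variable {p : T.Walk u v} {i : ℕ} {r : T.Walk (p.getVert i) z}

theorem color_eq (hT : T.IsTree) (hc : ¬ HasRainbowAP T 3 c) (h : IsBranch p i r) {a b k : ℕ}
    (ha : a ≤ p.length) (hb : b ≤ p.length) (hk : k ≤ r.length)
    (hab : ((a : ℤ) - b).natAbs = ((i : ℤ) - b).natAbs + k) :
    c (p.getVert a) = c (p.getVert b) ∨ c (p.getVert b) = c (r.getVert k) ∨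
      c (p.getVert a) = c (r.getVert k) := by
  apply color_eq_of_dist_eq hT.connected hc
  rw [AntiVDW.dist_getVert hT.isAcyclic h.isPath ha hb, h.dist_getVert hT.isAcyclic hb hk, hab]

theorem color_eq_of_middle (hT : T.IsTree) (hc : ¬ HasRainbowAP T 3 c) (h : IsBranch p i r)
    {a b k : ℕ} (ha : a ≤ p.length) (hb : b ≤ p.length) (hk : k ≤ r.length)
    (hab : ((i : ℤ) - a).natAbs = ((i : ℤ) - b).natAbs) :
    c (p.getVert a) = c (r.getVert k) ∨ c (r.getVert k) = c (p.getVert b) ∨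
      c (p.getVert a) = c (p.getVert b) := by
  apply color_eq_of_dist_eq hT.connected hc
  rw [T.dist_comm (u := r.getVert k), h.dist_getVert hT.isAcyclic ha hk,
    h.dist_getVert hT.isAcyclic hb hk, hab]

end IsBranch

/-- A path whose two ends have distinct colors and which meets a third color. -/
structure IsRainbowPath (c : V → α) (p : T.Walk u v) : Prop where
  isPath : p.IsPath
  start_ne_end : c u ≠ c v
  exists_third : ∃ w ∈ p.support, c u ≠ c w ∧ c w ≠ c v

/-- The minimal length of a path with ends of distinct colors that meets a third color. The value
is `0` if there is no such path. -/
noncomputable def rainbowLength (G : SimpleGraph V) (c : V → α) : ℕ :=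
  sInf {n | ∃ (u v : V) (p : G.Walk u v), IsRainbowPath c p ∧ p.length = n}

theorem IsRainbowPath.rainbowLength_le {p : T.Walk u v} (hp : IsRainbowPath c p) :
    rainbowLength T c ≤ p.length :=
  Nat.sInf_le ⟨u, v, p, hp, rfl⟩

theorem color_eq_of_lt_rainbowLength {p : T.Walk u v} (hp : p.IsPath) {i j k : ℕ} (hij : i ≤ j)
    (hjk : j ≤ k) (h : k < i + rainbowLength T c) :
    c (p.getVert i) = c (p.getVert j) ∨ c (p.getVert j) = c (p.getVert k) ∨
      c (p.getVert i) = c (p.getVert k) := by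
  by_contra! hne
  let q := (p.drop i).take (k - i)
  have getVert_q (l : ℕ) : q.getVert l = p.getVert (i + min (k - i) l) := by
    rw [SimpleGraph.Walk.take_getVert, SimpleGraph.Walk.drop_getVert]
  have mem_q : p.getVert j ∈ q.support := by
    convert q.getVert_mem_support (j - i) using 1
    rw [getVert_q]
    congr 1
    omega
  have end_q : (p.drop i).getVert (k - i) = p.getVert k := by
    rw [SimpleGraph.Walk.drop_getVert, Nat.add_sub_cancel' (hij.trans hjk)]
  have hq : IsRainbowPath c q := ⟨(hp.drop i).take _, by rw [end_q]; exact hne.2.2,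
    p.getVert j, mem_q, hne.1, by rw [end_q]; exact hne.2.1⟩
  have hlen : q.length ≤ k - i := by
    rw [SimpleGraph.Walk.take_length]
    exact min_le_left _ _
  have := hq.rainbowLength_le
  omega

theorem IsBranch.isRainbowPath_take_append {p : T.Walk u v} {i : ℕ} {r : T.Walk (p.getVert i) z}
    (h : IsBranch p i r) (huz : c u ≠ c z) (hui : c u ≠ c (p.getVert i))
    (hiz : c (p.getVert i) ≠ c z) : IsRainbowPath c ((p.take i).append r) :=
  ⟨h.isPath_take_append, huz, p.getVert i, by simp, hui, hiz⟩

theorem IsBranch.isRainbowPath_reverse_drop_append {p : T.Walk u v} {i : ℕ}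
    {r : T.Walk (p.getVert i) z} (h : IsBranch p i r) (hvz : c v ≠ c z)
    (hvi : c v ≠ c (p.getVert i)) (hiz : c (p.getVert i) ≠ c z) :
    IsRainbowPath c ((p.drop i).reverse.append r) :=
  ⟨h.isPath_reverse_drop_append, hvz, p.getVert i, by simp, hvi, hiz⟩

theorem exists_isRainbowPath (hT : T.Connected) {x y z : V} (hxy : c x ≠ c y)
    (hyz : c y ≠ c z) (hxz : c x ≠ c z) :
    ∃ (u v : V) (p : T.Walk u v), IsRainbowPath c p := by
  obtain ⟨p, hp, -⟩ := hT.exists_path_of_dist x y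
  obtain ⟨i, r, hr⟩ := exists_isBranch hT hp z
  by_cases hx : c (p.getVert i) = c x
  · exact ⟨_, _, _, hr.isRainbowPath_reverse_drop_append hyz (hx ▸ hxy.symm) (hx ▸ hxz)⟩
  by_cases hy : c (p.getVert i) = c y
  · exact ⟨_, _, _, hr.isRainbowPath_take_append hxz (hy ▸ hxy) (hy ▸ hyz)⟩
  · exact ⟨_, _, p, hp, hxy, p.getVert i, p.getVert_mem_support i, Ne.symm hx, hy⟩

/-- The first `n` edges of the path `p` form a strip: its two ends have distinct colors, and all
of its interior vertices, of which there is at least one, have a third color `B`. -/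
structure IsStrip (c : V → α) (p : T.Walk u v) (n : ℕ) (B : α) : Prop where
  isPath : p.IsPath
  one_lt : 1 < n
  le_length : n ≤ p.length
  color_eq : ∀ i, 0 < i → i < n → c (p.getVert i) = B
  start_ne : c (p.getVert 0) ≠ B
  end_ne : c (p.getVert n) ≠ B
  start_ne_end : c (p.getVert 0) ≠ c (p.getVert n)

theorem isStrip_of_color_ne {p : T.Walk u v} (hp : p.IsPath) {j : ℕ}
    (hj : j ≤ rainbowLength T c) (hle : rainbowLength T c ≤ p.length)
    (h₀ : c (p.getVert 0) ≠ c (p.getVert j))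
    (h₁ : c (p.getVert j) ≠ c (p.getVert (rainbowLength T c)))
    (h₂ : c (p.getVert 0) ≠ c (p.getVert (rainbowLength T c))) :
    IsStrip c p (rainbowLength T c) (c (p.getVert j)) := by
  have hj₀ : j ≠ 0 := by rintro rfl; exact h₀ rfl
  have hj₁ : j ≠ rainbowLength T c := by rintro rfl; exact h₁ rfl
  refine ⟨hp, by omega, hle, fun i hi₀ hi => ?_, h₀, h₁.symm, h₂⟩
  rcases le_total i j with hij | hji
  · have left := color_eq_of_lt_rainbowLength (c := c) hp hi₀.le hij (by omega)
    have right := color_eq_of_lt_rainbowLength (c := c) hp hij hj (by omega)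
    grind
  · have left := color_eq_of_lt_rainbowLength (c := c) hp j.zero_le hji (by omega)
    have right := color_eq_of_lt_rainbowLength (c := c) hp hji hi.le (by omega)
    grind

theorem exists_isStrip (hT : T.Connected) {x y z : V} (hxy : c x ≠ c y)
    (hyz : c y ≠ c z) (hxz : c x ≠ c z) :
    ∃ (u v : V) (p : T.Walk u v) (B : α), p.length = rainbowLength T c ∧
      IsStrip c p (rainbowLength T c) B := by
  obtain ⟨u, v, p, hp, hlen⟩ : rainbowLength T c ∈ _ :=
    Nat.sInf_mem <| by
      obtain ⟨u, v, p, hp⟩ := exists_isRainbowPath hT hxy hyz hxz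
      exact ⟨p.length, u, v, p, hp, rfl⟩
  obtain ⟨w, hw, huw, hwv⟩ := hp.exists_third
  obtain ⟨j, rfl, hj⟩ := SimpleGraph.Walk.mem_support_iff_exists_getVert.1 hw
  refine ⟨u, v, p, _, hlen, isStrip_of_color_ne hp.isPath (hlen ▸ hj) hlen.ge ?_ ?_ ?_⟩
  · rwa [p.getVert_zero]
  · rwa [← hlen, p.getVert_length]
  · rw [← hlen, p.getVert_zero, p.getVert_length]
    exact hp.start_ne_end

/-- The path `p` starts with a strip of length `n` and ends in a fourth color. -/
structure IsExtendedStrip (c : V → α) (p : T.Walk u v) (n : ℕ) (B : α) : Prop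
    extends IsStrip c p n B where
  last_ne_start : c v ≠ c (p.getVert 0)
  last_ne_interior : c v ≠ B
  last_ne_end : c v ≠ c (p.getVert n)

/-- If the branch left the interior of the strip, the vertices on it as far from the branching
vertex as the two ends of the strip would have the colors of these ends, making a shorter rainbow
path. -/
theorem IsStrip.eq_zero_or_eq_length (hT : T.IsTree) (hc : ¬ HasRainbowAP T 3 c) {p : T.Walk u v}
    {B : α} (hp : IsStrip c p p.length B) (hlen : p.length = rainbowLength T c) (hzu : c z ≠ c u)
    (hzB : c z ≠ B) (hzv : c z ≠ c v) {i : ℕ} {r : T.Walk (p.getVert i) z} (hr : IsBranch p i r) :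
    i = 0 ∨ i = p.length := by
  by_contra! hi
  have hi_le := hr.le_length
  obtain ⟨-, -, -, color_eq, start_ne, end_ne, start_ne_end⟩ := hp
  rw [p.getVert_zero] at start_ne start_ne_end
  rw [p.getVert_length] at end_ne start_ne_end
  have color_i := color_eq i (by omega) (by omega)
  have le_left := (hr.isRainbowPath_take_append hzu.symm (color_i ▸ start_ne)
    (color_i ▸ hzB.symm)).rainbowLength_le
  have le_right := (hr.isRainbowPath_reverse_drop_append hzv.symm (color_i ▸ end_ne)
    (color_i ▸ hzB.symm)).rainbowLength_le
  simp only [SimpleGraph.Walk.length_append, SimpleGraph.Walk.take_length,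
    SimpleGraph.Walk.length_reverse, SimpleGraph.Walk.drop_length] at le_left le_right
  have color_right : c (r.getVert (p.length - i)) = c v := by
    have through_start := hr.color_eq hT hc (a := p.length) (b := 0) (k := p.length - i)
      (by omega) (by omega) (by omega) (by omega)
    have through_branching := hr.color_eq hT hc (a := p.length) (b := i) (k := p.length - i)
      (by omega) (by omega) (by omega) (by omega)
    rw [p.getVert_length] at through_start through_branching
    rw [p.getVert_zero] at through_start
    grind
  have color_left : c (r.getVert i) = c u := by
    have through_end := hr.color_eq hT hc (a := 0) (b := p.length) (k := i)
      (by omega) (by omega) (by omega) (by omega)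
    have through_branching := hr.color_eq hT hc (a := 0) (b := i) (k := i)
      (by omega) (by omega) (by omega) (by omega)
    rw [p.getVert_zero] at through_end through_branching
    rw [p.getVert_length] at through_end
    grind
  have color_start : c (r.getVert 0) = B := by rw [r.getVert_zero, color_i]
  rcases le_total i (p.length - i) with hle | hle
  · have := color_eq_of_lt_rainbowLength (c := c) hr.isPath_branch i.zero_le hle (by omega)
    grind
  · have := color_eq_of_lt_rainbowLength (c := c) hr.isPath_branch (Nat.zero_le _) hle (by omega)
    grind

theorem IsStrip.congr {p : T.Walk u v} {n : ℕ} {B : α} (hp : IsStrip c p n B) {x y : V}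
    {q : T.Walk x y} (hq : q.IsPath) (hle : n ≤ q.length)
    (h : ∀ i ≤ n, c (q.getVert i) = c (p.getVert i)) : IsStrip c q n B where
  isPath := hq
  one_lt := hp.one_lt
  le_length := hle
  color_eq i hi₀ hi := by rw [h i hi.le, hp.color_eq i hi₀ hi]
  start_ne := by rw [h 0 n.zero_le]; exact hp.start_ne
  end_ne := by rw [h n le_rfl]; exact hp.end_ne
  start_ne_end := by rw [h 0 n.zero_le, h n le_rfl]; exact hp.start_ne_end

theorem IsStrip.reverse {p : T.Walk u v} {B : α} (hp : IsStrip c p p.length B) :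
    IsStrip c p.reverse p.length B where
  isPath := hp.isPath.reverse
  one_lt := hp.one_lt
  le_length := p.length_reverse.ge
  color_eq i hi₀ hi := by
    rw [p.getVert_reverse, hp.color_eq (p.length - i) (by omega) (by omega)]
  start_ne := by simpa [p.getVert_reverse] using hp.end_ne
  end_ne := by simpa [p.getVert_reverse] using hp.start_ne
  start_ne_end := by simpa [p.getVert_reverse] using hp.start_ne_end.symm

theorem exists_isExtendedStrip (hT : T.IsTree) (hc : ¬ HasRainbowAP T 3 c)
    (hcard : 3 < (Set.range c).encard) :
    ∃ (x z : V) (p : T.Walk x z) (B : α), IsExtendedStrip c p (rainbowLength T c) B := by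
  obtain ⟨x⟩ := hT.connected.nonempty
  obtain ⟨y, hyx, -⟩ := exists_color_ne hcard (c x) (c x) (c x)
  obtain ⟨w, hwx, hwy, -⟩ := exists_color_ne hcard (c x) (c y) (c x)
  obtain ⟨u, v, p, B, hlen, hp⟩ := exists_isStrip hT.connected hyx.symm hwy.symm hwx.symm
  obtain ⟨z, hzu, hzB, hzv⟩ := exists_color_ne hcard (c u) B (c v)
  obtain ⟨i, r, hr⟩ := exists_isBranch hT.connected hp.isPath z
  rw [← hlen] at hp ⊢
  rcases hp.eq_zero_or_eq_length hT hc hlen hzu hzB hzv hr with rfl | rfl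
  · have hq := hp.reverse.congr hr.isPath_reverse_drop_append
      (by simp [SimpleGraph.Walk.length_append]) fun i hi => congrArg c <| by
        rw [SimpleGraph.Walk.getVert_append', if_pos (by simpa using hi)]
        simp [SimpleGraph.Walk.getVert_reverse]
    refine ⟨v, z, _, B, hq, ?_, hzB, ?_⟩
    · rwa [SimpleGraph.Walk.getVert_zero]
    · simpa [SimpleGraph.Walk.getVert_append', SimpleGraph.Walk.getVert_reverse] using hzu
  · have hq := hp.congr hr.isPath_take_append
      (by simp [SimpleGraph.Walk.length_append]) fun i hi => congrArg c <| by
        rw [SimpleGraph.Walk.getVert_append', if_pos (by simpa using hi)]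
        simp [hi]
    refine ⟨u, z, _, B, hq, ?_, hzB, ?_⟩
    · rwa [SimpleGraph.Walk.getVert_zero]
    · simpa [SimpleGraph.Walk.getVert_append', SimpleGraph.Walk.take_getVert] using hzv

namespace IsExtendedStrip

variable {p : T.Walk u v} {n : ℕ} {B : α}

theorem odd (hT : T.IsTree) (hc : ¬ HasRainbowAP T 3 c) (hp : IsExtendedStrip c p n B) :
    Odd n := by
  rw [← Nat.not_even_iff_odd]
  rintro ⟨k, rfl⟩
  have one_lt := hp.one_lt
  have le_length := hp.le_length
  have color_half := hp.color_eq k (by omega) (by omega)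
  have midpoint := color_eq_of_midpoint hT hc hp.isPath (i := 0) (j := k) (k := k + k)
    (by omega) (by omega) (by omega)
  have start_ne := hp.start_ne
  have end_ne := hp.end_ne
  have start_ne_end := hp.start_ne_end
  grind

theorem two_mul_lt_length (hT : T.IsTree) (hc : ¬ HasRainbowAP T 3 c)
    (hp : IsExtendedStrip c p n B) : 2 * n < p.length := by
  by_contra! hle
  have n_ne_length : n ≠ p.length := by
    rintro rfl
    exact hp.last_ne_end (congrArg c p.getVert_length).symm
  have one_lt := hp.one_lt
  have le_length := hp.le_length
  have midpoint := color_eq_of_midpoint hT hc hp.isPath (i := 2 * n - p.length) (j := n)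
    (k := p.length) (by omega) le_rfl (by omega)
  rw [p.getVert_length] at midpoint
  obtain ⟨⟨-, -, -, color_eq, -, end_ne, start_ne_end⟩, last_ne_start, last_ne_interior,
    last_ne_end⟩ := hp
  grind

theorem color_succ (hT : T.IsTree) (hc : ¬ HasRainbowAP T 3 c)
    (hp : IsExtendedStrip c p n B) : c (p.getVert (n + 1)) = B := by
  obtain ⟨k, hk⟩ := hp.odd hT hc
  have one_lt := hp.one_lt
  have two_mul_lt_length := hp.two_mul_lt_length hT hc
  have start_ne := hp.start_ne
  have end_ne := hp.end_ne
  have start_ne_end := hp.start_ne_end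
  have color_pred := hp.color_eq (n - 1) (by omega) (by omega)
  have color_half := hp.color_eq (k + 1) (by omega) (by omega)
  have midpoint_half := color_eq_of_midpoint hT hc hp.isPath (i := 0) (j := k + 1) (k := n + 1)
    (by omega) (by omega) (by omega)
  have midpoint_end := color_eq_of_midpoint hT hc hp.isPath (i := n - 1) (j := n) (k := n + 1)
    (by omega) (by omega) (by omega)
  grind

theorem color_two_mul (hT : T.IsTree) (hc : ¬ HasRainbowAP T 3 c)
    (hp : IsExtendedStrip c p n B) :
    c (p.getVert (2 * n)) = c (p.getVert 0) ∨ c (p.getVert (2 * n)) = c (p.getVert n) := by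
  have two_mul_lt_length := hp.two_mul_lt_length hT hc
  have start_ne_end := hp.start_ne_end
  have midpoint := color_eq_of_midpoint hT hc hp.isPath (i := 0) (j := n) (k := 2 * n)
    (by omega) (by omega) (by omega)
  grind

theorem color_two_mul_sub_two (hT : T.IsTree) (hc : ¬ HasRainbowAP T 3 c)
    (hp : IsExtendedStrip c p n B) : c (p.getVert (2 * n - 2)) = B := by
  obtain ⟨k, hk⟩ := hp.odd hT hc
  have one_lt := hp.one_lt
  have two_mul_lt_length := hp.two_mul_lt_length hT hc
  have start_ne := hp.start_ne
  have end_ne := hp.end_ne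
  have start_ne_end := hp.start_ne_end
  have color_two := hp.color_eq 2 (by omega) (by omega)
  have color_pred := hp.color_eq (n - 1) (by omega) (by omega)
  have midpoint_pred := color_eq_of_midpoint hT hc hp.isPath (i := 0) (j := n - 1) (k := 2 * n - 2)
    (by omega) (by omega) (by omega)
  have midpoint_end := color_eq_of_midpoint hT hc hp.isPath (i := 2) (j := n) (k := 2 * n - 2)
    (by omega) (by omega) (by omega)
  grind

theorem drop (hT : T.IsTree) (hc : ¬ HasRainbowAP T 3 c)
    (hp : IsExtendedStrip c p (rainbowLength T c) B)
    (h : c (p.getVert (2 * rainbowLength T c)) = c (p.getVert 0)) :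
    IsExtendedStrip c (p.drop (rainbowLength T c)) (rainbowLength T c) B := by
  have one_lt := hp.one_lt
  have length_lt := hp.two_mul_lt_length hT hc
  have color_succ := hp.color_succ hT hc
  have getVert_drop (i : ℕ) := p.drop_getVert (rainbowLength T c) i
  have getVert_two_mul := getVert_drop (rainbowLength T c)
  rw [← two_mul] at getVert_two_mul
  obtain ⟨⟨isPath, -, -, -, start_ne, end_ne, start_ne_end⟩, last_ne_start, last_ne_interior,
    last_ne_end⟩ := hp
  have hs := isStrip_of_color_ne (c := c) (isPath.drop (rainbowLength T c)) (j := 1)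
    one_lt.le (by rw [SimpleGraph.Walk.drop_length]; omega)
    (by rw [getVert_drop, getVert_drop, color_succ]; exact end_ne)
    (by rw [getVert_drop, getVert_two_mul, color_succ, h]; exact start_ne.symm)
    (by rw [getVert_drop, getVert_two_mul, h]; exact start_ne_end.symm)
  rw [getVert_drop, color_succ] at hs
  exact ⟨hs, by rw [getVert_drop]; exact last_ne_end, last_ne_interior,
    by rw [getVert_two_mul, h]; exact last_ne_start⟩

theorem exists_color_two_mul_eq (hT : T.IsTree) (hc : ¬ HasRainbowAP T 3 c)
    (hp : IsExtendedStrip c p (rainbowLength T c) B) :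
    ∃ (u v : V) (q : T.Walk u v) (B : α), IsExtendedStrip c q (rainbowLength T c) B ∧
      c (q.getVert (2 * rainbowLength T c)) = c (q.getVert (rainbowLength T c)) := by
  induction hlen : p.length using Nat.strong_induction_on generalizing u v with
  | _ m ih =>
    obtain h | h := hp.color_two_mul hT hc
    · have one_lt := hp.one_lt
      have le_length := hp.le_length
      exact ih _ (by rw [SimpleGraph.Walk.drop_length]; omega) (hp.drop hT hc h) rfl
    · exact ⟨u, v, p, B, hp, h⟩

section Neighbors

variable {q : V}

theorem mem_support_of_adj_getVert (hT : T.IsTree) (hc : ¬ HasRainbowAP T 3 c)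
    (hp : IsExtendedStrip c p n B) (h : c (p.getVert (2 * n)) = c (p.getVert n))
    (hq : T.Adj (p.getVert n) q) : q ∈ p.support := by
  by_contra hqp
  obtain ⟨k, hk⟩ := hp.odd hT hc
  have one_lt := hp.one_lt
  have length_lt := hp.two_mul_lt_length hT hc
  have start_ne := hp.start_ne
  have end_ne := hp.end_ne
  have start_ne_end := hp.start_ne_end
  have color_pred := hp.color_eq (n - 1) (by omega) (by omega)
  have color_half := hp.color_eq (k + 1) (by omega) (by omega)
  have hr := isBranch_of_adj hp.isPath (by omega) hq hqp
  have hlen := hq.length_toWalk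
  have getVert_one : hq.toWalk.getVert 1 = q := by simp
  have color_q : c q = B := by
    have through_n := hr.color_eq hT hc (a := n - 1) (b := n) (k := 1)
      (by omega) (by omega) (by omega) (by omega)
    have through_half := hr.color_eq hT hc (a := 0) (b := k + 1) (k := 1)
      (by omega) (by omega) (by omega) (by omega)
    grind
  have middle := hr.color_eq_of_middle hT hc (a := 0) (b := 2 * n) (k := 1)
    (by omega) (by omega) (by omega) (by omega)
  grind

theorem mem_support_of_adj_getVert_pred (hT : T.IsTree) (hc : ¬ HasRainbowAP T 3 c)
    (hp : IsExtendedStrip c p n B) (hq : T.Adj (p.getVert (n - 1)) q) : q ∈ p.support := by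
  by_contra hqp
  obtain ⟨k, hk⟩ := hp.odd hT hc
  have one_lt := hp.one_lt
  have length_lt := hp.two_mul_lt_length hT hc
  have start_ne := hp.start_ne
  have end_ne := hp.end_ne
  have start_ne_end := hp.start_ne_end
  have last_ne_end := hp.last_ne_end
  have last_ne_interior := hp.last_ne_interior
  have color_pred := hp.color_eq (n - 1) (by omega) (by omega)
  have color_sub_two := hp.color_eq (n - 2) (by omega) (by omega)
  have hr := isBranch_of_adj hp.isPath (by omega) hq hqp
  have hlen := hq.length_toWalk
  have getVert_one : hq.toWalk.getVert 1 = q := by simp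
  have getVert_length := p.getVert_length
  have color_q : c q = c (p.getVert n) := by
    have through_start := hr.color_eq hT hc (a := n) (b := 0) (k := 1)
      (by omega) (by omega) (by omega) (by omega)
    have through_pred := hr.color_eq hT hc (a := n) (b := n - 1) (k := 1)
      (by omega) (by omega) (by omega) (by omega)
    grind
  have through_last := hr.color_eq hT hc (a := n - 2) (b := p.length) (k := 1)
    (by omega) (by omega) (by omega) (by omega)
  grind

theorem mem_support_of_adj_getVert_succ (hT : T.IsTree) (hc : ¬ HasRainbowAP T 3 c)
    (hp : IsExtendedStrip c p n B) (h : c (p.getVert (2 * n)) = c (p.getVert n))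
    (hq : T.Adj (p.getVert (n + 1)) q) : q ∈ p.support := by
  by_contra hqp
  have one_lt := hp.one_lt
  have length_lt := hp.two_mul_lt_length hT hc
  have start_ne := hp.start_ne
  have end_ne := hp.end_ne
  have start_ne_end := hp.start_ne_end
  have last_ne_end := hp.last_ne_end
  have last_ne_interior := hp.last_ne_interior
  have color_one := hp.color_eq 1 (by omega) (by omega)
  have color_succ := hp.color_succ hT hc
  have color_two_mul_sub_two := hp.color_two_mul_sub_two hT hc
  have hr := isBranch_of_adj hp.isPath (by omega) hq hqp
  have hlen := hq.length_toWalk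
  have getVert_one : hq.toWalk.getVert 1 = q := by simp
  have getVert_length := p.getVert_length
  have color_q : c q = c (p.getVert n) := by
    have through_last := hr.color_eq hT hc (a := n) (b := p.length) (k := 1)
      (by omega) (by omega) (by omega) (by omega)
    have through_succ := hr.color_eq hT hc (a := n) (b := n + 1) (k := 1)
      (by omega) (by omega) (by omega) (by omega)
    grind
  obtain length_eq | length_lt : p.length = 2 * n + 1 ∨ 2 * n + 1 < p.length := by omega
  · have middle := hr.color_eq_of_middle hT hc (a := 1) (b := p.length) (k := 1)
      (by omega) (by omega) (by omega) (by omega)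
    grind
  · have middle := hr.color_eq_of_middle hT hc (a := 0) (b := 2 * n + 2) (k := 1)
      (by omega) (by omega) (by omega) (by omega)
    have midpoint_succ := color_eq_of_midpoint hT hc hp.isPath (i := 0) (j := n + 1)
      (k := 2 * n + 2) (by omega) (by omega) (by omega)
    have midpoint_two_mul := color_eq_of_midpoint hT hc hp.isPath (i := 2 * n - 2) (j := 2 * n)
      (k := 2 * n + 2) (by omega) (by omega) (by omega)
    grind

end Neighbors

theorem isBijacent_getVert (hT : T.IsTree) (hc : ¬ HasRainbowAP T 3 c)
    (hp : IsExtendedStrip c p n B) (h : c (p.getVert (2 * n)) = c (p.getVert n)) :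
    IsBijacent T (p.getVert n) := by
  have one_lt := hp.one_lt
  have length_lt := hp.two_mul_lt_length hT hc
  refine AntiVDW.isBijacent_getVert hT.isAcyclic hp.isPath one_lt (by omega)
    fun j hnj hjn q hq => ?_
  obtain rfl | rfl | rfl : j = n - 1 ∨ j = n ∨ j = n + 1 := by omega
  · exact hp.mem_support_of_adj_getVert_pred hT hc hq
  · exact hp.mem_support_of_adj_getVert hT hc h hq
  · exact hp.mem_support_of_adj_getVert_succ hT hc h hq

end IsExtendedStrip

theorem hasRainbowAP_of_three_lt_encard_range (hT : T.IsTree) (h : ∀ v, ¬ IsBijacent T v)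
    (hcard : 3 < (Set.range c).encard) : HasRainbowAP T 3 c := by
  by_contra hc
  obtain ⟨x, z, p, B, hp⟩ := exists_isExtendedStrip hT hc hcard
  obtain ⟨u, v, q, B, hq, hcolor⟩ := hp.exists_color_two_mul_eq hT hc
  exact h _ (hq.isBijacent_getVert hT hc hcolor)

end Colorings

end

theorem stmt_7_general {V : Type*} {T : SimpleGraph V} (hT : T.IsTree)
    (h : ∀ v, ¬ IsBijacent T v) : aw T 3 ≤ 4 := by
  refine Nat.sInf_le ⟨by norm_num, fun c hc => hasRainbowAP_of_three_lt_encard_range hT h ?_⟩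
  rw [hc.range_eq, Set.encard_univ, ENat.card_eq_coe_fintype_card, Fintype.card_fin]
  norm_num

theorem stmt_7 {V : Type*} [Fintype V] (T : SimpleGraph V) [DecidableRel T.Adj]
    (hT : T.IsTree) (h : ∀ v : V, ¬ Bijacent T v) :
    aw T 3 ≤ 4 :=
  stmt_7_general hT fun v hv => h v (isBijacent_iff_bijacent.1 hv)

end AntiVDW
end

section
/- If T is a tree with ℓ ≥ 1 bijacent vertices, then aw(T,3) ≤ log_2(ℓ) + 4. -/
namespace AntiVDW

/-!
The extreme points of a minimal convex set seeing all colors of a rainbow-free coloring have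
pairwise odd distances, so in a tree there are at most two of them and all colors appear on a single
geodesic. Trim it until both end colors are unique, say to the indices `l, …, r`, and let `a` be the
last index from which one color fewer is still seen. Then `2 * a > l + r`, since otherwise
`l, a, 2 * a - l` is rainbow. By symmetry both halves of the path see all but one of its colors, so
every further color doubles the number of bijacent vertices. With four colors each half already
contains a bijacent vertex: the colors from `a` on are `C B … B D`, and any branch at `a - 1`, `a`
or `a + 1` would complete a rainbow progression with the path. Hence `s + 4` colors force
`2 ^ (s + 1)` bijacent vertices.
-/

section TreeMetric

variable {V : Type*} {G T : SimpleGraph V} {u v w x q : V}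

/-- `v` is metrically between `u` and `w`, i.e. (in a connected graph) `v` lies on some shortest
walk from `u` to `w`. -/
abbrev Between (G : SimpleGraph V) (u v w : V) : Prop :=
  G.dist u v + G.dist v w = G.dist u w

lemma between_of_mem_support (p : G.Walk u w) (hp : p.length = G.dist u w)
    (hv : v ∈ p.support) : Between G u v w := by
  classical
  have htake := SimpleGraph.length_eq_dist_of_subwalk hp (p.isSubwalk_takeUntil hv)
  have hdrop := SimpleGraph.length_eq_dist_of_subwalk hp (p.isSubwalk_dropUntil hv)
  rw [Between, ← htake, ← hdrop, ← hp, ← SimpleGraph.Walk.length_append, p.take_spec hv]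

lemma mem_support_of_between (hT : T.IsTree) (h : Between T u v w) (p : T.Walk u w) :
    v ∈ p.support := by
  classical
  obtain ⟨p₁, -, hp₁⟩ := hT.connected.exists_path_of_dist u v
  obtain ⟨p₂, -, hp₂⟩ := hT.connected.exists_path_of_dist v w
  have hpath : (p₁.append p₂).IsPath :=
    SimpleGraph.Walk.isPath_of_length_eq_dist _ <| by
      rw [SimpleGraph.Walk.length_append, hp₁, hp₂, h]
  have hbypass : p.bypass = p₁.append p₂ :=
    congrArg Subtype.val ((hT.isAcyclic.subsingleton_path u w).elim ⟨_, p.bypass_isPath⟩ ⟨_, hpath⟩)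
  apply p.support_bypass_subset_support
  rw [hbypass]
  exact (SimpleGraph.Walk.mem_support_append_iff _ _).2 (.inl p₁.end_mem_support)

/-- Removing `v` separates `u` from `w`, so the walk from `u` to `w` through `y` meets `v`. -/
lemma between_or_between (hT : T.IsTree) (h : Between T u v w) (y : V) :
    Between T u v y ∨ Between T y v w := by
  obtain ⟨p₁, -, hp₁⟩ := hT.connected.exists_path_of_dist u y
  obtain ⟨p₂, -, hp₂⟩ := hT.connected.exists_path_of_dist y w
  exact ((SimpleGraph.Walk.mem_support_append_iff _ _).1
    (mem_support_of_between hT h (p₁.append p₂))).imp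
      (between_of_mem_support p₁ hp₁) (between_of_mem_support p₂ hp₂)

lemma dist_eq_dist_add_one_of_adj_of_ne (hT : T.IsTree) (hq : T.Adj v q) (hw : T.Adj v w)
    (hne : q ≠ w) (hx : T.dist x v = T.dist x w + 1) : T.dist x q = T.dist x v + 1 := by
  have hqv : T.dist q v = 1 := SimpleGraph.dist_eq_one_iff_adj.2 hq.symm
  have hvw : T.dist v w = 1 := SimpleGraph.dist_eq_one_iff_adj.2 hw
  have hbetween : Between T q v w := by
    have hle : T.dist q w ≤ T.dist q v + T.dist v w := hT.connected.dist_triangle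
    have hpos : 0 < T.dist q w := hT.connected.pos_dist_of_ne hne
    have hparity : T.dist q v ≠ T.dist q w := hT.dist_ne_of_adj q hw
    omega
  have := T.dist_comm (u := q) (v := x)
  have := T.dist_comm (u := v) (v := x)
  rcases between_or_between hT hbetween x with h | h <;> omega

lemma even_dist_of_isTree (hT : T.IsTree) (u v w : V) :
    Even (T.dist u v) ∨ Even (T.dist v w) ∨ Even (T.dist w u) := by
  obtain ⟨p₁, -, hp₁⟩ := hT.connected.exists_path_of_dist u v
  obtain ⟨p₂, -, hp₂⟩ := hT.connected.exists_path_of_dist v w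
  obtain ⟨p₃, -, hp₃⟩ := hT.connected.exists_path_of_dist w u
  have hloop : Even ((p₁.append p₂).append p₃).length :=
    SimpleGraph.two_colorable_iff_forall_loop_even.1 hT.colorable_two u _
  rw [SimpleGraph.Walk.length_append, SimpleGraph.Walk.length_append, hp₁, hp₂, hp₃] at hloop
  grind

end TreeMetric

section Geodesic

variable {V : Type*} {G T : SimpleGraph V} {p : ℤ → V} {i j l r : ℤ} {z : V}

/-- The vertices `p l, …, p r` form a geodesic. The index set is an interval of `ℤ`, so that
subpaths need no reindexing and a path is reversed by `i ↦ -i`. -/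
def IsGeodesicOn (G : SimpleGraph V) (p : ℤ → V) (l r : ℤ) : Prop :=
  ∀ ⦃i j : ℤ⦄, i ∈ Set.Icc l r → j ∈ Set.Icc l r → G.dist (p i) (p j) = (i - j).natAbs

namespace IsGeodesicOn

lemma mono (hp : IsGeodesicOn G p l r) {l' r' : ℤ} (hl : l ≤ l') (hr : r' ≤ r) :
    IsGeodesicOn G p l' r' := fun _ _ hi hj =>
  hp (Set.Icc_subset_Icc hl hr hi) (Set.Icc_subset_Icc hl hr hj)

lemma comp_neg (hp : IsGeodesicOn G p l r) : IsGeodesicOn G (fun i => p (-i)) (-r) (-l) := by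
  rintro i j ⟨hri, hil⟩ ⟨hrj, hjl⟩
  rw [hp ⟨by omega, by omega⟩ ⟨by omega, by omega⟩]
  omega

lemma injOn (hp : IsGeodesicOn G p l r) : Set.InjOn p (Set.Icc l r) := by
  intro i hi j hj hij
  have hdist := hp hi hj
  rw [hij, SimpleGraph.dist_self] at hdist
  omega

lemma adj_succ (hp : IsGeodesicOn G p l r) (hi : i ∈ Set.Ico l r) : G.Adj (p i) (p (i + 1)) := by
  obtain ⟨hli, hir⟩ := hi
  rw [← SimpleGraph.dist_eq_one_iff_adj, hp ⟨hli, hir.le⟩ ⟨by omega, by omega⟩]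
  omega

lemma adj_pred (hp : IsGeodesicOn G p l r) (hi : i ∈ Set.Ioc l r) : G.Adj (p i) (p (i - 1)) := by
  obtain ⟨hli, hir⟩ := hi
  rw [← SimpleGraph.dist_eq_one_iff_adj, hp ⟨hli.le, hir⟩ ⟨by omega, by omega⟩]
  omega

lemma exists_eq_of_between (hT : T.IsTree) (hp : IsGeodesicOn T p l r) (hlr : l ≤ r)
    (hz : Between T (p l) z (p r)) : ∃ i ∈ Set.Icc l r, p i = z := by
  obtain ⟨i, hi_eq⟩ : ∃ i : ℤ, i = l + T.dist (p l) z := ⟨_, rfl⟩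
  have hends := hp ⟨le_rfl, hlr⟩ ⟨hlr, le_rfl⟩
  have hi : i ∈ Set.Icc l r := ⟨by omega, by omega⟩
  have hleft := hp ⟨le_rfl, hlr⟩ hi
  have hright := hp hi ⟨hlr, le_rfl⟩
  refine ⟨i, hi, hT.connected.dist_eq_zero_iff.1 ?_⟩
  have := T.dist_comm (u := p i) (v := z)
  rcases between_or_between hT hz (p i) with h | h <;> omega

end IsGeodesicOn

lemma dist_getVert_add {u v : V} (w : G.Walk u v) (hw : w.length = G.dist u v) {m k : ℕ}
    (hmk : m + k ≤ w.length) : G.dist (w.getVert m) (w.getVert (m + k)) = k := by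
  have hsub := SimpleGraph.length_eq_dist_of_subwalk hw
    (((w.drop m).isSubwalk_take k).trans (w.isSubwalk_drop m))
  simp only [SimpleGraph.Walk.drop_getVert, SimpleGraph.Walk.take_length,
    SimpleGraph.Walk.drop_length] at hsub
  omega

lemma exists_isGeodesicOn (hG : G.Connected) (u v : V) :
    ∃ p : ℤ → V, IsGeodesicOn G p 0 (G.dist u v) ∧ p 0 = u ∧ p (G.dist u v) = v := by
  obtain ⟨w, -, hw⟩ := hG.exists_path_of_dist u v
  refine ⟨fun i => w.getVert i.toNat, ?_, w.getVert_zero, ?_⟩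
  · rintro i j ⟨hi, hi'⟩ ⟨hj, hj'⟩
    lift i to ℕ using hi
    lift j to ℕ using hj
    simp only [Int.toNat_natCast]
    rcases le_total i j with hij | hji
    · obtain ⟨k, rfl⟩ := Nat.exists_eq_add_of_le hij
      rw [dist_getVert_add w hw (by omega)]
      omega
    · obtain ⟨k, rfl⟩ := Nat.exists_eq_add_of_le hji
      rw [SimpleGraph.dist_comm, dist_getVert_add w hw (by omega)]
      omega
  · simp only [Int.toNat_natCast, ← hw, w.getVert_length]

lemma exists_between_dist_eq_dist (hG : G.Connected) {u v : V} (h : Even (G.dist u v)) :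
    ∃ m, Between G u m v ∧ G.dist u m = G.dist m v := by
  obtain ⟨k, hk⟩ := h
  obtain ⟨p, hp, hu, hv⟩ := exists_isGeodesicOn hG u v
  have hleft : G.dist u (p k) = k := by
    rw [← hu, hp ⟨by omega, by omega⟩ ⟨by omega, by omega⟩]
    omega
  have hright : G.dist (p k) v = k := by
    rw [← hv, hp ⟨by omega, by omega⟩ ⟨by omega, by omega⟩]
    omega
  exact ⟨p k, by omega, by omega⟩

end Geodesic

section ExtremePoint

variable {V : Type*} {G T : SimpleGraph V} {S : Set V} {x y z : V}

/-- A vertex set is geodesically convex if it contains every vertex between two of its members. -/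
def IsGeodConvex (G : SimpleGraph V) (S : Set V) : Prop :=
  ∀ ⦃u⦄, u ∈ S → ∀ ⦃w⦄, w ∈ S → ∀ ⦃v⦄, Between G u v w → v ∈ S

/-- An extreme point of `S` is a member of `S` that is not strictly between two members of `S`. -/
structure IsExtremePoint (G : SimpleGraph V) (S : Set V) (z : V) : Prop where
  mem : z ∈ S
  eq_or_eq : ∀ u ∈ S, ∀ v ∈ S, Between G u z v → u = z ∨ v = z

lemma IsGeodConvex.diff_singleton (hS : IsGeodConvex G S) (hz : IsExtremePoint G S z) :
    IsGeodConvex G (S \ {z}) := by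
  rintro u ⟨hu, huz⟩ w ⟨hw, hwz⟩ v hv
  refine ⟨hS hu hw hv, ?_⟩
  rintro rfl
  exact (hz.eq_or_eq u hu w hw hv).elim huz hwz

lemma isExtremePoint_of_forall_between_eq (hT : T.IsTree) (hz : z ∈ S)
    (h : ∀ v ∈ S, Between T x z v → v = z) : IsExtremePoint T S z := by
  refine ⟨hz, fun u hu v hv huzv => ?_⟩
  refine (between_or_between hT huzv x).imp (fun huzx => h u hu ?_) (h v hv)
  have := T.dist_comm (u := u) (v := z)
  have := T.dist_comm (u := z) (v := x)
  have := T.dist_comm (u := u) (v := x)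
  omega

lemma isExtremePoint_of_forall_dist_le (hT : T.IsTree) (hz : z ∈ S)
    (h : ∀ v ∈ S, T.dist x v ≤ T.dist x z) : IsExtremePoint T S z := by
  refine isExtremePoint_of_forall_between_eq hT hz (x := x) fun v hv hxzv => ?_
  refine (hT.connected.dist_eq_zero_iff.1 ?_).symm
  have := h v hv
  omega

/-- Let `x` be a point of `S` farthest from an arbitrary one, `y` a point farthest from `x`, and
`z` a point farthest from `x` among those not between `x` and `y`. -/
lemma exists_forall_between_or_three_isExtremePoint (hT : T.IsTree) (hS : S.Finite)
    (hne : S.Nonempty) :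
    (∃ x y, ∀ z ∈ S, Between T x z y) ∨
      ∃ x y z, (x ≠ y ∧ y ≠ z ∧ z ≠ x) ∧
        IsExtremePoint T S x ∧ IsExtremePoint T S y ∧ IsExtremePoint T S z := by
  have ⟨o, _⟩ := hne
  obtain ⟨x, hx, hx_max⟩ := Set.exists_max_image S (T.dist o) hS hne
  obtain ⟨y, hy, hy_max⟩ := Set.exists_max_image S (T.dist x) hS hne
  rcases {z ∈ S | ¬ Between T x z y}.eq_empty_or_nonempty with hempty | hne'
  · exact .inl ⟨x, y, fun z hz => not_not.1 fun hzn => (hempty ▸ ⟨hz, hzn⟩ : z ∈ (∅ : Set V))⟩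
  obtain ⟨z, ⟨hz, hxzy⟩, hz_max⟩ := Set.exists_max_image _ (T.dist x) (hS.sep _) hne'
  have hz_extreme : IsExtremePoint T S z := by
    refine isExtremePoint_of_forall_between_eq hT hz (x := x) fun v hv hxzv => ?_
    by_cases hxvy : Between T x v y
    · have : T.dist z y ≤ T.dist z v + T.dist v y := hT.connected.dist_triangle
      have : T.dist x y ≤ T.dist x z + T.dist z y := hT.connected.dist_triangle
      omega
    · have := hz_max v ⟨hv, hxvy⟩
      exact (hT.connected.dist_eq_zero_iff.1 (by omega)).symm
  have hzx : z ≠ x := by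
    rintro rfl
    simp at hxzy
  have hyz : y ≠ z := by
    rintro rfl
    simp at hxzy
  have hxy : x ≠ y := by
    rintro rfl
    have := hy_max z hz
    rw [SimpleGraph.dist_self, Nat.le_zero, hT.connected.dist_eq_zero_iff] at this
    exact hyz this
  exact .inr ⟨x, y, z, ⟨hxy, hyz, hzx⟩, isExtremePoint_of_forall_dist_le hT hx hx_max,
    isExtremePoint_of_forall_dist_le hT hy hy_max, hz_extreme⟩

end ExtremePoint

section RainbowFree

variable {V α : Type*} {G T : SimpleGraph V} {c : V → α} {u v w : V}

lemma color_eq_of_dist_eq_dist (hG : G.Connected) (hc : ¬ HasRainbowAP G 3 c)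
    (h : G.dist u v = G.dist v w) : c u = c v ∨ c v = c w ∨ c u = c w := by
  contrapose! hc
  obtain ⟨huv, hvw, huw⟩ := hc
  refine ⟨fun i => if i = 0 then u else if i = 1 then v else w,
    ⟨G.dist u v, fun i hi => ⟨hG _ _, ?_⟩⟩, fun i j hi hj hij => ?_⟩
  · obtain rfl | rfl : i = 0 ∨ i = 1 := by omega
    · simp
    · simp [h]
  · interval_cases i <;> interval_cases j <;> simp_all [eq_comm]

/-- The midpoint of an even geodesic would be the middle of a rainbow 3-AP. -/
lemma not_even_dist_of_color_unique (hG : G.Connected) (hc : ¬ HasRainbowAP G 3 c) {S : Set V}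
    (hS : IsGeodConvex G S) (hu : u ∈ S) (hv : v ∈ S) (huv : u ≠ v)
    (hu_unique : ∀ s ∈ S, c s = c u → s = u) (hv_unique : ∀ s ∈ S, c s = c v → s = v) :
    ¬ Even (G.dist u v) := by
  intro heven
  obtain ⟨m, hbetween, hdist⟩ := exists_between_dist_eq_dist hG heven
  have hm : m ∈ S := hS hu hv hbetween
  have hpos : 0 < G.dist u v := hG.pos_dist_of_ne huv
  rcases color_eq_of_dist_eq_dist hG hc hdist with h | h | h
  · have : G.dist u m = 0 := hG.dist_eq_zero_iff.2 (hu_unique m hm h.symm).symm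
    omega
  · have : G.dist m v = 0 := hG.dist_eq_zero_iff.2 (hv_unique m hm h)
    omega
  · exact huv (hv_unique u hu h)

/-- Discard extreme points whose color occurs elsewhere in `S`. The extreme points that remain are
pairwise at odd distance, so there are at most two of them and the rest of `S` lies in between. -/
lemma exists_isGeodesicOn_image_subset [DecidableEq α] (hT : T.IsTree)
    (hc : ¬ HasRainbowAP T 3 c) (S : Finset V) (hS : IsGeodConvex T (S : Set V))
    (hne : S.Nonempty) :
    ∃ (p : ℤ → V) (l r : ℤ), IsGeodesicOn T p l r ∧
      S.image c ⊆ (Finset.Icc l r).image (c ∘ p) := by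
  classical
  induction S using Finset.strongInduction with
  | H S ih =>
  by_cases hredundant : ∃ z, IsExtremePoint T S z ∧ ∃ s ∈ S, s ≠ z ∧ c s = c z
  · obtain ⟨z, hz, s, hs, hsz, hcs⟩ := hredundant
    have hs' : s ∈ S.erase z := Finset.mem_erase.2 ⟨hsz, hs⟩
    obtain ⟨p, l, r, hp, hcolors⟩ := ih (S.erase z) (Finset.erase_ssubset hz.mem)
      (by simpa only [Finset.coe_erase] using hS.diff_singleton hz) ⟨s, hs'⟩
    refine ⟨p, l, r, hp, fun x hx => hcolors ?_⟩
    obtain ⟨v, hv, rfl⟩ := Finset.mem_image.1 hx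
    by_cases hvz : v = z
    · exact Finset.mem_image.2 ⟨s, hs', by rw [hcs, hvz]⟩
    · exact Finset.mem_image_of_mem c (Finset.mem_erase.2 ⟨hvz, hv⟩)
  · have hunique : ∀ z, IsExtremePoint T S z → ∀ s ∈ (S : Set V), c s = c z → s = z :=
      fun z hz s hs hcs => not_not.1 fun hsz => hredundant ⟨z, hz, s, hs, hsz, hcs⟩
    have hodd : ∀ u v, IsExtremePoint T S u → IsExtremePoint T S v → u ≠ v →
        ¬ Even (T.dist u v) := fun u v hu hv huv =>
      not_even_dist_of_color_unique hT.connected hc hS hu.mem hv.mem huv (hunique u hu)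
        (hunique v hv)
    rcases exists_forall_between_or_three_isExtremePoint hT S.finite_toSet hne with
      ⟨x, y, hxy⟩ | ⟨x, y, z, ⟨hxy, hyz, hzx⟩, hx, hy, hz⟩
    · obtain ⟨p, hp, rfl, hy⟩ := exists_isGeodesicOn hT.connected x y
      refine ⟨p, _, _, hp, fun a ha => ?_⟩
      obtain ⟨v, hv, rfl⟩ := Finset.mem_image.1 ha
      obtain ⟨i, hi, rfl⟩ := hp.exists_eq_of_between hT (by omega) (hy.symm ▸ hxy v hv)
      exact Finset.mem_image.2 ⟨i, Finset.mem_Icc.2 hi, rfl⟩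
    · rcases even_dist_of_isTree hT x y z with h | h | h
      · exact absurd h (hodd x y hx hy hxy)
      · exact absurd h (hodd y z hy hz hyz)
      · exact absurd h (hodd z x hz hx hzx)

end RainbowFree

section IntegerColoring

variable {α : Type*} {f : ℤ → α} {i j k l a r : ℤ}

/-- The coloring `f` of the integers `l, …, r` has no rainbow three-term arithmetic progression. -/
def RainbowFreeOn (f : ℤ → α) (l r : ℤ) : Prop :=
  ∀ ⦃i j k : ℤ⦄, i ∈ Set.Icc l r → k ∈ Set.Icc l r → i + k = 2 * j →
    f i = f j ∨ f j = f k ∨ f i = f k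

/-- Each endpoint of `l, …, r` is the only index of its color under `f`. -/
structure HasUniqueEnds (f : ℤ → α) (l r : ℤ) : Prop where
  ne_left : ∀ i ∈ Set.Ioc l r, f i ≠ f l
  ne_right : ∀ i ∈ Set.Ico l r, f i ≠ f r

lemma HasUniqueEnds.comp_neg (h : HasUniqueEnds f l r) :
    HasUniqueEnds (fun i => f (-i)) (-r) (-l) := by
  refine ⟨fun i hi => ?_, fun i hi => ?_⟩
  · rw [Set.mem_Ioc] at hi
    rw [neg_neg]
    exact h.ne_right _ ⟨by omega, by omega⟩
  · rw [Set.mem_Ico] at hi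
    rw [neg_neg]
    exact h.ne_left _ ⟨by omega, by omega⟩

namespace RainbowFreeOn

lemma eq_of_left_add_eq (hf : RainbowFreeOn f l r) (h : HasUniqueEnds f l r) (hj : l < j)
    (hk : k ≤ r) (hjk : l + k = 2 * j) : f j = f k := by
  rcases hf ⟨le_rfl, by omega⟩ ⟨by omega, hk⟩ hjk with h' | h' | h'
  · exact absurd h'.symm (h.ne_left j ⟨hj, by omega⟩)
  · exact h'
  · exact absurd h'.symm (h.ne_left k ⟨by omega, hk⟩)

lemma eq_of_add_right_eq (hf : RainbowFreeOn f l r) (h : HasUniqueEnds f l r) (hi : l ≤ i)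
    (hj : j < r) (hij : i + r = 2 * j) : f i = f j := by
  rcases hf ⟨hi, by omega⟩ ⟨by omega, le_rfl⟩ hij with h' | h' | h'
  · exact h'
  · exact absurd h' (h.ne_right j ⟨by omega, hj⟩)
  · exact absurd h' (h.ne_right i ⟨hi, by omega⟩)

lemma odd_add (hf : RainbowFreeOn f l r) (h : HasUniqueEnds f l r) (hlr : l < r) :
    Odd (l + r) := by
  rw [← Int.not_even_iff_odd]
  rintro ⟨m, hm⟩
  exact h.ne_right m ⟨by omega, by omega⟩
    (hf.eq_of_left_add_eq h (by omega) le_rfl (by omega))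

end RainbowFreeOn

section Card

variable [DecidableEq α] {n : ℕ}

lemma image_Icc_comp_neg (f : ℤ → α) (l r : ℤ) :
    (Finset.Icc (-r) (-l)).image (fun i => f (-i)) = (Finset.Icc l r).image f := by
  ext x
  simp only [Finset.mem_image, Finset.mem_Icc]
  constructor
  · rintro ⟨i, hi, rfl⟩
    exact ⟨-i, by omega, rfl⟩
  · rintro ⟨i, hi, rfl⟩
    exact ⟨-i, by omega, by rw [neg_neg]⟩

lemma image_Icc_subset_insert_left (f : ℤ → α) (l r : ℤ) :
    (Finset.Icc l r).image f ⊆ insert (f l) ((Finset.Icc (l + 1) r).image f) := by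
  rw [← Finset.image_insert]
  refine Finset.image_subset_image fun i hi => ?_
  rw [Finset.mem_insert, Finset.mem_Icc]
  rw [Finset.mem_Icc] at hi
  omega

lemma card_image_Icc_le_succ (f : ℤ → α) (l r : ℤ) :
    ((Finset.Icc l r).image f).card ≤ ((Finset.Icc (l + 1) r).image f).card + 1 :=
  (Finset.card_le_card (image_Icc_subset_insert_left f l r)).trans (Finset.card_insert_le _ _)

/-- Take the greatest `a` for which `a, …, r` still receives `n` colors. -/
lemma exists_card_image_Icc_eq_left (hn : 0 < n) (h : n ≤ ((Finset.Icc l r).image f).card) :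
    ∃ a, l ≤ a ∧ a ≤ r ∧ ((Finset.Icc a r).image f).card = n ∧
      ∀ i ∈ Set.Ioc a r, f i ≠ f a := by
  have hle : ∀ a, n ≤ ((Finset.Icc a r).image f).card → a ≤ r := by
    intro a ha
    by_contra! har
    rw [Finset.Icc_eq_empty (by omega), Finset.image_empty, Finset.card_empty] at ha
    omega
  obtain ⟨a, ha, hmax⟩ := Int.exists_greatest_of_bdd ⟨r, hle⟩ ⟨l, h⟩
  have hsucc : ((Finset.Icc (a + 1) r).image f).card < n := by
    by_contra! hcon
    have := hmax _ hcon
    omega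
  have hcard := card_image_Icc_le_succ f a r
  refine ⟨a, hmax l h, hle a ha, by omega, fun i hi hia => ?_⟩
  have hmem : f a ∈ (Finset.Icc (a + 1) r).image f :=
    Finset.mem_image.2 ⟨i, Finset.mem_Icc.2 hi, hia⟩
  have := Finset.card_le_card (image_Icc_subset_insert_left f a r)
  rw [Finset.insert_eq_self.2 hmem] at this
  omega

lemma exists_card_image_Icc_eq_right (hn : 0 < n) (h : n ≤ ((Finset.Icc l r).image f).card) :
    ∃ b, l ≤ b ∧ b ≤ r ∧ ((Finset.Icc l b).image f).card = n ∧
      ∀ i ∈ Set.Ico l b, f i ≠ f b := by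
  rw [← image_Icc_comp_neg] at h
  obtain ⟨a, hra, hal, hcard, hunique⟩ := exists_card_image_Icc_eq_left hn h
  refine ⟨-a, by omega, by omega, ?_, fun i hi => ?_⟩
  · rw [← image_Icc_comp_neg, neg_neg, hcard]
  · rw [Set.mem_Ico] at hi
    simpa only [neg_neg] using hunique (-i) ⟨by omega, by omega⟩

lemma exists_hasUniqueEnds (hn : 0 < n) (h : n ≤ ((Finset.Icc l r).image f).card) :
    ∃ l' r', l ≤ l' ∧ r' ≤ r ∧ HasUniqueEnds f l' r' ∧
      ((Finset.Icc l' r').image f).card = n := by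
  obtain ⟨l', hl, -, hcard, hleft⟩ := exists_card_image_Icc_eq_left hn h
  obtain ⟨r', -, hr, hcard', hright⟩ := exists_card_image_Icc_eq_right hn hcard.ge
  exact ⟨l', r', hl, hr, ⟨fun i hi => hleft i ⟨hi.1, hi.2.trans hr⟩, hright⟩, hcard'⟩

/-- If `a ≤ (l + r) / 2`, then `l, a, 2 * a - l` would be a rainbow progression. -/
lemma RainbowFreeOn.exists_gt_midpoint (hf : RainbowFreeOn f l r) (h : HasUniqueEnds f l r)
    (hn : 0 < n) (hcard : n + 1 ≤ ((Finset.Icc l r).image f).card) :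
    ∃ a, l + r < 2 * a ∧ a ≤ r ∧ ((Finset.Icc a r).image f).card = n ∧
      ∀ i ∈ Set.Ioc a r, f i ≠ f a := by
  have hsucc := card_image_Icc_le_succ f l r
  obtain ⟨a, hla, har, hcard_a, hunique⟩ :=
    exists_card_image_Icc_eq_left (f := f) (l := l + 1) (r := r) hn (by omega)
  refine ⟨a, ?_, har, hcard_a, hunique⟩
  by_contra! hmid
  exact hunique (2 * a - l) ⟨by omega, by omega⟩
    (hf.eq_of_left_add_eq h (by omega) (by omega) (by omega)).symm

end Card

/-- The colors of `l, …, r` read `A … C B … B D` where `A` and `D` occur only at the ends and the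
displayed `C` stands at an index `a` past the midpoint. -/
structure HasThreeColorTail (f : ℤ → α) (l a r : ℤ) : Prop extends HasUniqueEnds f l r where
  midpoint_lt : l + r < 2 * a
  add_two_le : a + 2 ≤ r
  eq_succ : ∀ i ∈ Set.Ioo a r, f i = f (a + 1)
  ne_succ : f a ≠ f (a + 1)

namespace HasThreeColorTail

lemma of_card_eq_three [DecidableEq α] (h : HasUniqueEnds f l r) (hmid : l + r < 2 * a)
    (hcard : ((Finset.Icc a r).image f).card = 3) (hunique : ∀ i ∈ Set.Ioc a r, f i ≠ f a) :
    HasThreeColorTail f l a r := by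
  have har : a + 2 ≤ r := by
    have := (Finset.card_image_le (s := Finset.Icc a r) (f := f)).trans_eq (Int.card_Icc a r)
    omega
  refine ⟨h, hmid, har, fun i hi => ?_, (hunique _ ⟨by omega, by omega⟩).symm⟩
  obtain ⟨hai, hir⟩ := hi
  by_contra hne
  have hsub : ({f a, f r, f i, f (a + 1)} : Finset α) ⊆ (Finset.Icc a r).image f := by
    intro x hx
    simp only [Finset.mem_insert, Finset.mem_singleton] at hx
    rcases hx with rfl | rfl | rfl | rfl <;>
      exact Finset.mem_image_of_mem f (Finset.mem_Icc.2 ⟨by omega, by omega⟩)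
  have hfour : ({f a, f r, f i, f (a + 1)} : Finset α).card = 4 := by
    have := hunique r ⟨by omega, le_rfl⟩
    have := hunique i ⟨hai, hir.le⟩
    have := hunique (a + 1) ⟨by omega, by omega⟩
    have := h.ne_right i ⟨by omega, hir⟩
    have := h.ne_right (a + 1) ⟨by omega, by omega⟩
    grind
  have := Finset.card_le_card hsub
  omega

lemma odd_sub (h : HasThreeColorTail f l a r) (hf : RainbowFreeOn f l r) : Odd (r - a) := by
  have := h.midpoint_lt
  have := h.add_two_le
  rw [← Int.not_even_iff_odd]
  rintro ⟨k, hk⟩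
  have hmid := h.eq_succ (a + k) ⟨by omega, by omega⟩
  rcases hf (i := a) (j := a + k) (k := r) ⟨by omega, by omega⟩ ⟨by omega, le_rfl⟩ (by omega) with
    h' | h' | h'
  · exact h.ne_succ (h'.trans hmid)
  · exact h.ne_right _ ⟨by omega, by omega⟩ h'
  · exact h.ne_right _ ⟨by omega, by omega⟩ h'

lemma color_reflect (h : HasThreeColorTail f l a r) (hf : RainbowFreeOn f l r) :
    f (2 * a - r) = f a := by
  have := h.midpoint_lt
  have := h.add_two_le
  exact hf.eq_of_add_right_eq h.toHasUniqueEnds (by omega) (by omega) (by omega)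

lemma color_pred (h : HasThreeColorTail f l a r) (hf : RainbowFreeOn f l r) :
    f (a - 1) = f (a + 1) := by
  have := h.midpoint_lt
  have := h.add_two_le
  obtain ⟨k, hk⟩ := h.odd_sub hf
  rw [← h.eq_succ (a + k) ⟨by omega, by omega⟩]
  exact hf.eq_of_add_right_eq h.toHasUniqueEnds (by omega) (by omega) (by omega)

end HasThreeColorTail

end IntegerColoring

section Branch

variable {V α : Type*} {G T : SimpleGraph V} {c : V → α} {p : ℤ → V} {i j k l a r : ℤ} {q : V}

/-- `q` is a neighbor of `p i` off the path `…, p (i - 1), p i, p (i + 1), …`. -/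
structure IsBranch_s8 (G : SimpleGraph V) (p : ℤ → V) (i : ℤ) (q : V) : Prop where
  adj : G.Adj (p i) q
  ne_pred : q ≠ p (i - 1)
  ne_succ : q ≠ p (i + 1)

lemma IsGeodesicOn.degree_eq_two (hp : IsGeodesicOn G p l r) (hi : i ∈ Set.Ioo l r)
    [Fintype (G.neighborSet (p i))] (h : ∀ q, ¬ IsBranch_s8 G p i q) : G.degree (p i) = 2 := by
  classical
  have hneighbors : G.neighborFinset (p i) = {p (i - 1), p (i + 1)} := by
    ext q
    rw [SimpleGraph.mem_neighborFinset, Finset.mem_insert, Finset.mem_singleton]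
    constructor
    · intro hq
      by_contra! hne
      exact h q ⟨hq, hne.1, hne.2⟩
    · rintro (rfl | rfl)
      · exact hp.adj_pred ⟨hi.1, hi.2.le⟩
      · exact hp.adj_succ ⟨hi.1.le, hi.2⟩
  rw [← SimpleGraph.card_neighborFinset_eq_degree, hneighbors, Finset.card_pair]
  intro heq
  obtain ⟨hli, hir⟩ := hi
  have := hp.injOn ⟨by omega, by omega⟩ ⟨by omega, by omega⟩ heq
  omega

lemma IsGeodesicOn.bijacent [Fintype V] [DecidableRel G.Adj] (hp : IsGeodesicOn G p l r)
    (hl : l + 1 < i) (hr : i + 1 < r) (hpred : ∀ q, ¬ IsBranch_s8 G p (i - 1) q)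
    (hself : ∀ q, ¬ IsBranch_s8 G p i q) (hsucc : ∀ q, ¬ IsBranch_s8 G p (i + 1) q) :
    Bijacent G (p i) := by
  refine ⟨hp.degree_eq_two ⟨by omega, by omega⟩ hself, fun u hu => ?_⟩
  rw [SimpleGraph.mem_neighborFinset] at hu
  by_cases hu_pred : u = p (i - 1)
  · exact hu_pred ▸ hp.degree_eq_two ⟨by omega, by omega⟩ hpred
  by_cases hu_succ : u = p (i + 1)
  · exact hu_succ ▸ hp.degree_eq_two ⟨by omega, by omega⟩ hsucc
  exact absurd ⟨hu, hu_pred, hu_succ⟩ (hself u)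

lemma IsGeodesicOn.rainbowFreeOn (hp : IsGeodesicOn G p l r) (hG : G.Connected)
    (hc : ¬ HasRainbowAP G 3 c) : RainbowFreeOn (c ∘ p) l r := by
  rintro i j k ⟨hli, hir⟩ ⟨hlk, hkr⟩ hijk
  apply color_eq_of_dist_eq_dist hG hc
  rw [hp ⟨by omega, by omega⟩ ⟨by omega, by omega⟩, hp ⟨by omega, by omega⟩ ⟨by omega, by omega⟩]
  omega

namespace IsBranch_s8

lemma dist_eq (hq : IsBranch_s8 T p i q) (hT : T.IsTree) (hp : IsGeodesicOn T p l r)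
    (hi : i ∈ Set.Icc l r) (hj : j ∈ Set.Icc l r) :
    T.dist (p j) q = (j - i).natAbs + 1 := by
  obtain ⟨hli, hir⟩ := hi
  obtain ⟨hlj, hjr⟩ := hj
  have hji := hp ⟨hlj, hjr⟩ ⟨hli, hir⟩
  rcases lt_trichotomy j i with hlt | rfl | hgt
  · have hpred := hp (i := j) (j := i - 1) ⟨hlj, hjr⟩ ⟨by omega, by omega⟩
    rw [dist_eq_dist_add_one_of_adj_of_ne hT hq.adj (hp.adj_pred ⟨by omega, hir⟩) hq.ne_pred
      (by omega), hji]
  · rw [SimpleGraph.dist_eq_one_iff_adj.2 hq.adj, sub_self, Int.natAbs_zero]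
  · have hsucc := hp (i := j) (j := i + 1) ⟨hlj, hjr⟩ ⟨by omega, by omega⟩
    rw [dist_eq_dist_add_one_of_adj_of_ne hT hq.adj (hp.adj_succ ⟨hli, by omega⟩) hq.ne_succ
      (by omega), hji]

lemma color_eq_of_end (hq : IsBranch_s8 T p i q) (hT : T.IsTree) (hc : ¬ HasRainbowAP T 3 c)
    (hp : IsGeodesicOn T p l r) (hi : i ∈ Set.Icc l r) (hj : j ∈ Set.Icc l r)
    (hk : k ∈ Set.Icc l r) (hjk : (j - i).natAbs + 1 = (j - k).natAbs) :
    c q = c (p j) ∨ c (p j) = c (p k) ∨ c q = c (p k) := by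
  apply color_eq_of_dist_eq_dist hT.connected hc
  rw [SimpleGraph.dist_comm, hq.dist_eq hT hp hi hj, hp hj hk, hjk]

lemma color_eq_of_middle_s8 (hq : IsBranch_s8 T p i q) (hT : T.IsTree) (hc : ¬ HasRainbowAP T 3 c)
    (hp : IsGeodesicOn T p l r) (hi : i ∈ Set.Icc l r) (hj : j ∈ Set.Icc l r)
    (hk : k ∈ Set.Icc l r) (hjk : j + k = 2 * i) :
    c (p j) = c q ∨ c q = c (p k) ∨ c (p j) = c (p k) := by
  apply color_eq_of_dist_eq_dist hT.connected hc
  rw [hq.dist_eq hT hp hi hj, SimpleGraph.dist_comm, hq.dist_eq hT hp hi hk]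
  omega

end IsBranch_s8

namespace HasThreeColorTail

lemma not_isBranch (h : HasThreeColorTail (c ∘ p) l a r) (hT : T.IsTree)
    (hc : ¬ HasRainbowAP T 3 c) (hp : IsGeodesicOn T p l r) (q : V) : ¬ IsBranch_s8 T p a q := by
  intro hq
  have hf := hp.rainbowFreeOn hT.connected hc
  have := h.midpoint_lt
  have := h.add_two_le
  obtain ⟨k, hk⟩ := h.odd_sub hf
  have ha : a ∈ Set.Icc l r := ⟨by omega, by omega⟩
  have hr : r ∈ Set.Icc l r := ⟨by omega, le_rfl⟩
  have hreflect := h.color_reflect hf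
  have hmid := h.eq_succ (a + k) ⟨by omega, by omega⟩
  have hne := h.ne_succ
  have hne_right := h.ne_right a ⟨by omega, by omega⟩
  have hne_right' := h.ne_right (a + 1) ⟨by omega, by omega⟩
  have hq_ends := hq.color_eq_of_middle_s8 hT hc hp ha (j := 2 * a - r) ⟨by omega, by omega⟩ hr
    (by omega)
  have hq_tail := hq.color_eq_of_end hT hc hp ha (j := a + k) ⟨by omega, by omega⟩ hr (by omega)
  have hq_color : c q = c (p r) := by grind
  have hq_succ := hq.color_eq_of_end hT hc hp ha ha (k := a + 1) ⟨by omega, by omega⟩ (by omega)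
  grind

lemma not_isBranch_succ (h : HasThreeColorTail (c ∘ p) l a r) (hT : T.IsTree)
    (hc : ¬ HasRainbowAP T 3 c) (hp : IsGeodesicOn T p l r) (q : V) :
    ¬ IsBranch_s8 T p (a + 1) q := by
  intro hq
  have hf := hp.rainbowFreeOn hT.connected hc
  have := h.midpoint_lt
  have := h.add_two_le
  obtain ⟨k, hk⟩ := h.odd_sub hf
  obtain ⟨m, hm⟩ := hf.odd_add h.toHasUniqueEnds (by omega)
  have ha : a ∈ Set.Icc l r := ⟨by omega, by omega⟩
  have ha' : a + 1 ∈ Set.Icc l r := ⟨by omega, by omega⟩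
  have hl : l ∈ Set.Icc l r := ⟨le_rfl, by omega⟩
  have hr : r ∈ Set.Icc l r := ⟨by omega, le_rfl⟩
  have hmid : (c ∘ p) (m - k + 1) = (c ∘ p) (a + 2) :=
    hf.eq_of_left_add_eq h.toHasUniqueEnds (by omega) (by omega) (by omega)
  have htail := h.eq_succ (a + 2) ⟨by omega, by omega⟩
  have hne := h.ne_succ
  have hne_right := h.ne_right a ⟨by omega, by omega⟩
  have hne_right' := h.ne_right (a + 1) ⟨by omega, by omega⟩
  have hne_left := h.ne_left a ⟨by omega, by omega⟩
  have hne_left' := h.ne_left (a + 1) ⟨by omega, by omega⟩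
  have hq_right := hq.color_eq_of_end hT hc hp ha' hr ha (by omega)
  have hq_pred := hq.color_eq_of_end hT hc hp ha' ha' ha (by omega)
  have hq_color : c q = c (p a) := by grind
  have hq_left := hq.color_eq_of_end hT hc hp ha' (j := m - k + 1) ⟨by omega, by omega⟩ hl
    (by omega)
  grind

lemma not_isBranch_pred (h : HasThreeColorTail (c ∘ p) l a r) (hT : T.IsTree)
    (hc : ¬ HasRainbowAP T 3 c) (hp : IsGeodesicOn T p l r) (q : V) :
    ¬ IsBranch_s8 T p (a - 1) q := by
  intro hq
  have hf := hp.rainbowFreeOn hT.connected hc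
  have := h.midpoint_lt
  have := h.add_two_le
  obtain ⟨m, hm⟩ := hf.odd_add h.toHasUniqueEnds (by omega)
  have ha : a ∈ Set.Icc l r := ⟨by omega, by omega⟩
  have ha' : a - 1 ∈ Set.Icc l r := ⟨by omega, by omega⟩
  have hl : l ∈ Set.Icc l r := ⟨le_rfl, by omega⟩
  have hr : r ∈ Set.Icc l r := ⟨by omega, le_rfl⟩
  have hpred := h.color_pred hf
  have hne := h.ne_succ
  have hne_right := h.ne_right a ⟨by omega, by omega⟩
  have hne_right' := h.ne_right (a + 1) ⟨by omega, by omega⟩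
  have hne_left := h.ne_left a ⟨by omega, by omega⟩
  have hne_left' := h.ne_left (a + 1) ⟨by omega, by omega⟩
  have hq_left := hq.color_eq_of_end hT hc hp ha' hl ha (by omega)
  have hq_succ := hq.color_eq_of_end hT hc hp ha' ha' ha (by omega)
  have hq_color : c q = c (p a) := by grind
  rcases (show m + 1 ≤ a by omega).eq_or_lt with hma | hma
  · have htail := h.eq_succ (r - 1) ⟨by omega, by omega⟩
    have hq_middle := hq.color_eq_of_middle_s8 hT hc hp ha' hl (k := r - 1) ⟨by omega, by omega⟩
      (by omega)
    grind
  · have hreflect : (c ∘ p) (2 * a - 2 - r) = (c ∘ p) (a - 1) :=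
      hf.eq_of_add_right_eq h.toHasUniqueEnds (by omega) (by omega) (by omega)
    have hq_middle := hq.color_eq_of_middle_s8 hT hc hp ha' (j := 2 * a - 2 - r)
      ⟨by omega, by omega⟩ hr (by omega)
    grind

lemma bijacent [Fintype V] [DecidableRel T.Adj] (h : HasThreeColorTail (c ∘ p) l a r)
    (hT : T.IsTree) (hc : ¬ HasRainbowAP T 3 c) (hp : IsGeodesicOn T p l r) :
    Bijacent T (p a) := by
  have := h.midpoint_lt
  have := h.add_two_le
  exact hp.bijacent (by omega) (by omega) (h.not_isBranch_pred hT hc hp)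
    (h.not_isBranch hT hc hp) (h.not_isBranch_succ hT hc hp)

end HasThreeColorTail

end Branch

section Counting

open Classical in
/-- The indices in `l, …, r` of the bijacent vertices on the path `p`; on a geodesic their number
is the number of bijacent vertices met. -/
noncomputable def bijacentIndices {V : Type*} [Fintype V] (G : SimpleGraph V) [DecidableRel G.Adj]
    (p : ℤ → V) (l r : ℤ) : Finset ℤ :=
  {i ∈ Finset.Icc l r | Bijacent G (p i)}

variable {V α : Type*} [Fintype V] [DecidableEq α] {G T : SimpleGraph V} [DecidableRel G.Adj]
  [DecidableRel T.Adj] {c : V → α} {p : ℤ → V} {l r : ℤ} {k m s : ℕ}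

lemma mem_bijacentIndices {i : ℤ} :
    i ∈ bijacentIndices G p l r ↔ i ∈ Set.Icc l r ∧ Bijacent G (p i) := by
  simp only [bijacentIndices, Finset.mem_filter, Finset.mem_Icc, Set.mem_Icc]

lemma card_bijacentIndices_comp_neg :
    (bijacentIndices G (fun i => p (-i)) (-r) (-l)).card = (bijacentIndices G p l r).card := by
  refine Finset.card_nbij' (- ·) (- ·) ?_ ?_ (fun i _ => neg_neg i) fun i _ => neg_neg i
  all_goals
    intro i hi
    simp only [Finset.mem_coe, mem_bijacentIndices, Set.mem_Icc, neg_neg] at hi ⊢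
    exact ⟨by omega, hi.2⟩

lemma card_bijacentIndices_add_le {l' r' a b : ℤ} (hl : l ≤ l') (hr : r' ≤ r)
    (hb : 2 * b < l' + r') (ha : l' + r' < 2 * a) :
    (bijacentIndices G p l' b).card + (bijacentIndices G p a r').card ≤
      (bijacentIndices G p l r).card := by
  rw [← Finset.card_union_of_disjoint]
  · refine Finset.card_le_card fun i hi => ?_
    simp only [Finset.mem_union, mem_bijacentIndices, Set.mem_Icc] at hi ⊢
    rcases hi with ⟨hi, hi'⟩ | ⟨hi, hi'⟩ <;> exact ⟨by omega, hi'⟩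
  · refine Finset.disjoint_left.2 fun i hi hi' => ?_
    simp only [mem_bijacentIndices, Set.mem_Icc] at hi hi'
    omega

lemma IsGeodesicOn.card_bijacentIndices_le_ncard (hp : IsGeodesicOn G p l r) :
    (bijacentIndices G p l r).card ≤ {v : V | Bijacent G v}.ncard := by
  rw [← Set.ncard_coe_finset]
  exact Set.ncard_le_ncard_of_injOn p (fun i hi => (mem_bijacentIndices.1 hi).2)
    (hp.injOn.mono fun i hi => (mem_bijacentIndices.1 hi).1)

/-- Apply the hypothesis to a trimmed path and to its reversal: the two halves are disjoint. -/
lemma two_mul_le_card_bijacentIndices (hk : 0 < k)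
    (half : ∀ {p : ℤ → V} {l r : ℤ}, IsGeodesicOn G p l r → HasUniqueEnds (c ∘ p) l r →
      ((Finset.Icc l r).image (c ∘ p)).card = k →
        ∃ a, l + r < 2 * a ∧ m ≤ (bijacentIndices G p a r).card)
    (hp : IsGeodesicOn G p l r) (hcard : k ≤ ((Finset.Icc l r).image (c ∘ p)).card) :
    2 * m ≤ (bijacentIndices G p l r).card := by
  obtain ⟨l', r', hl, hr, hends, hcard'⟩ := exists_hasUniqueEnds hk hcard
  have hp' := hp.mono hl hr
  obtain ⟨a, ha, hma⟩ := half hp' hends hcard'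
  obtain ⟨b, hb, hmb⟩ := half hp'.comp_neg hends.comp_neg
    (by rwa [← image_Icc_comp_neg] at hcard')
  rw [← neg_neg b, card_bijacentIndices_comp_neg] at hmb
  have := card_bijacentIndices_add_le (G := G) (p := p) hl hr (b := -b) (by omega) ha
  omega

lemma exists_one_le_card_bijacentIndices (hT : T.IsTree) (hc : ¬ HasRainbowAP T 3 c)
    (hp : IsGeodesicOn T p l r) (h : HasUniqueEnds (c ∘ p) l r)
    (hcard : 4 ≤ ((Finset.Icc l r).image (c ∘ p)).card) :
    ∃ a, l + r < 2 * a ∧ 1 ≤ (bijacentIndices T p a r).card := by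
  obtain ⟨a, hmid, har, hcard_a, hunique⟩ :=
    (hp.rainbowFreeOn hT.connected hc).exists_gt_midpoint h (n := 3) (by norm_num) hcard
  have htail := HasThreeColorTail.of_card_eq_three h hmid hcard_a hunique
  exact ⟨a, hmid, Finset.card_pos.2
    ⟨a, mem_bijacentIndices.2 ⟨⟨le_rfl, har⟩, htail.bijacent hT hc hp⟩⟩⟩

lemma two_pow_succ_le_card_bijacentIndices (hT : T.IsTree) (hc : ¬ HasRainbowAP T 3 c)
    (hp : IsGeodesicOn T p l r) (hs : s + 4 ≤ ((Finset.Icc l r).image (c ∘ p)).card) :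
    2 ^ (s + 1) ≤ (bijacentIndices T p l r).card := by
  induction s generalizing p l r with
  | zero =>
    exact two_mul_le_card_bijacentIndices (by norm_num) (fun hp h hcard =>
      exists_one_le_card_bijacentIndices hT hc hp h hcard.ge) hp hs
  | succ s ih =>
    rw [pow_succ']
    refine two_mul_le_card_bijacentIndices (k := s + 1 + 4) (by omega) (fun hp h hcard => ?_) hp hs
    obtain ⟨a, hmid, har, hcard_a, -⟩ := (hp.rainbowFreeOn hT.connected hc).exists_gt_midpoint h
      (n := s + 4) (by omega) (by omega)
    exact ⟨a, hmid, ih (hp.mono (by omega) le_rfl) hcard_a.ge⟩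

end Counting

section AntiVanDerWaerden

variable {V α : Type*} [Fintype V] {T : SimpleGraph V} [DecidableRel T.Adj] {c : V → α} {s : ℕ}

lemma two_pow_succ_le_ncard_bijacent [DecidableEq α] (hT : T.IsTree) (hc : ¬ HasRainbowAP T 3 c)
    (hs : s + 4 ≤ (Finset.univ.image c).card) :
    2 ^ (s + 1) ≤ {v : V | Bijacent T v}.ncard := by
  have : Nonempty V := hT.connected.nonempty
  obtain ⟨p, l, r, hp, hcolors⟩ := exists_isGeodesicOn_image_subset hT hc Finset.univ
    (fun _ _ _ _ v _ => Finset.mem_coe.2 (Finset.mem_univ v)) Finset.univ_nonempty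
  exact (two_pow_succ_le_card_bijacentIndices hT hc hp
    (hs.trans (Finset.card_le_card hcolors))).trans hp.card_bijacentIndices_le_ncard

lemma aw_three_le (hT : T.IsTree) : aw T 3 ≤ Nat.log 2 {v : V | Bijacent T v}.ncard + 4 := by
  refine Nat.sInf_le ⟨by omega, fun c hc_surj => ?_⟩
  by_contra hc
  refine (Nat.lt_pow_succ_log_self one_lt_two _).not_ge (two_pow_succ_le_ncard_bijacent hT hc ?_)
  rw [Finset.image_univ_of_surjective hc_surj, Finset.card_univ, Fintype.card_fin]

end AntiVanDerWaerden

theorem stmt_8 {V : Type*} [Fintype V] (T : SimpleGraph V) [DecidableRel T.Adj]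
    (hT : T.IsTree) (ℓ : ℕ) (hℓ : {v : V | Bijacent T v}.ncard = ℓ) (h1 : 1 ≤ ℓ) :
    (aw T 3 : ℝ) ≤ Real.logb 2 ℓ + 4 := by
  subst hℓ
  calc (aw T 3 : ℝ) ≤ (Nat.log 2 {v : V | Bijacent T v}.ncard : ℝ) + 4 := by
        exact_mod_cast aw_three_le hT
    _ ≤ Real.logb 2 {v : V | Bijacent T v}.ncard + 4 := by
        gcongr
        exact_mod_cast Real.natLog_le_logb {v : V | Bijacent T v}.ncard 2

end AntiVDW
end
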